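/- arXiv:math/0309439 — 3 statements merged into one kernel-verified Lean document; each statement's English description precedes it below -/
import Mathlib

section
/- Let (F,W) be a mixed Hodge structure on V. Then there exists a unique bigrading V = ⊕_{p,q∈ℤ} I^{p,q} of V by complex subspaces such that: (a) F^p = ⊕_{a≥p, b∈ℤ} I^{a,b} for every p; (b) W_k = ⊕_{a+b≤k} I^{a,b} for every k; (c) conj(I^{p,q}) ⊆ I^{q,p} + ⊕_{r<q, s<p} I^{r,s} for every p and q. -/
open Complex

noncomputable section

/-- A conjugation (real structure) on a complex vector space: an additive,
conjugate-semilinear involution of `V`. -/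
structure Conjugation (V : Type*) [AddCommGroup V] [Module ℂ V] where
  toFun : V →ₛₗ[starRingEnd ℂ] V
  invol : ∀ v, toFun (toFun v) = v

namespace Conjugation

variable {V : Type*} [AddCommGroup V] [Module ℂ V]

/-- The image of a complex subspace under the conjugation; it is again a
complex subspace. -/
def submap (c : Conjugation V) (S : Submodule ℂ V) : Submodule ℂ V where
  carrier := c.toFun '' (S : Set V)
  add_mem' := by
    rintro _ _ ⟨x, hx, rfl⟩ ⟨y, hy, rfl⟩
    exact ⟨x + y, S.add_mem hx hy, map_add _ _ _⟩
  zero_mem' := ⟨0, S.zero_mem, map_zero _⟩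
  smul_mem' := by
    rintro a _ ⟨x, hx, rfl⟩
    refine ⟨(starRingEnd ℂ) a • x, S.smul_mem _ hx, ?_⟩
    rw [map_smulₛₗ, starRingEnd_self_apply]

end Conjugation

/-- `(F, W)` is a mixed Hodge structure on `V` relative to the conjugation `c`:
`F` is a finite decreasing filtration by complex subspaces, `W` is a finite
increasing filtration by real (conjugation-stable) subspaces, and `F` induces
on each graded piece `Gr^W_k = W_k / W_{k-1}` a pure Hodge structure of
weight `k`. -/
structure IsMHS {V : Type*} [AddCommGroup V] [Module ℂ V] (c : Conjugation V)
    (F W : ℤ → Submodule ℂ V) : Prop where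
  antitone_F : Antitone F
  exists_F_top : ∃ p, F p = ⊤
  exists_F_bot : ∃ p, F p = ⊥
  monotone_W : Monotone W
  exists_W_bot : ∃ k, W k = ⊥
  exists_W_top : ∃ k, W k = ⊤
  real_W : ∀ k, ∀ v ∈ W k, c.toFun v ∈ W k
  graded_sup : ∀ k p : ℤ,
    ((F p ⊓ W k).map (W (k-1)).mkQ) ⊔ ((c.submap (F (k - p + 1)) ⊓ W k).map (W (k-1)).mkQ)
      = (W k).map (W (k-1)).mkQ
  graded_inf : ∀ k p : ℤ,
    ((F p ⊓ W k).map (W (k-1)).mkQ) ⊓ ((c.submap (F (k - p + 1)) ⊓ W k).map (W (k-1)).mkQ)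
      = ⊥

/-- `I` is a Deligne bigrading for the pair of filtrations `(F, W)`:
`V = ⊕_{p,q} I^{p,q}`, `F^p = ⊕_{a ≥ p} I^{a,b}`, `W_k = ⊕_{a+b ≤ k} I^{a,b}`,
and `conj (I^{p,q}) ⊆ I^{q,p} + ⊕_{r<q,s<p} I^{r,s}`. -/
structure IsDeligneBigrading {V : Type*} [AddCommGroup V] [Module ℂ V] (c : Conjugation V)
    (F W : ℤ → Submodule ℂ V) (I : ℤ → ℤ → Submodule ℂ V) : Prop where
  internal : DirectSum.IsInternal (fun pq : ℤ × ℤ => I pq.1 pq.2)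
  hF : ∀ p : ℤ, F p = ⨆ pq : ℤ × ℤ, ⨆ _ : p ≤ pq.1, I pq.1 pq.2
  hW : ∀ k : ℤ, W k = ⨆ pq : ℤ × ℤ, ⨆ _ : pq.1 + pq.2 ≤ k, I pq.1 pq.2
  conj_cond : ∀ p q : ℤ, ∀ v ∈ I p q,
    c.toFun v ∈ I q p ⊔ ⨆ pq : ℤ × ℤ, ⨆ _ : pq.1 < q ∧ pq.2 < p, I pq.1 pq.2

/-!
Let `G` be the conjugate of the filtration `F`. In the lattice of subspaces, purity of `Gr^W_k` says
that for `p + q = k + 1` the elements `F p` and `G q` are complementary in the interval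
`[W (k - 1), W k]`. Deligne's explicit bigrading is
`I^{p,q} = F^p ∩ W_{p+q} ∩ (G^q ∩ W_{p+q} + ∑_{r < q} G^r ∩ W_{p+r-1})`,
and the modular law is all that is needed to analyse it. Write `U` for the last factor. Induction
along `W` and complementarity give `W_{p+q-1} ⊆ F^p ∩ W_{p+q-1} + U`, so `I^{p,q}` surjects onto
the `(p, q)` part of `Gr^W_{p+q}`, and `F^p ∩ U ∩ W_{p+q-1} = 0`, so this surjection is injective.
Exchanging `F` and `G` turns `I^{p,q}` into the conjugate of the bigrading, which yields the
conjugation condition; conversely that condition forces any bigrading compatible with `F` and `W`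
to lie inside `I`, hence to equal it.
-/

theorem iSupIndep_of_disjoint_iSup_le {α ι κ : Type*} [CompleteLattice α] [IsModularLattice α]
    [IsCompactlyGenerated α] [LinearOrder κ] {f : ι → α} (rank : ι → κ)
    (hf : ∀ i, Disjoint (f i) (⨆ j, ⨆ _ : j ≠ i ∧ rank j ≤ rank i, f j)) : iSupIndep f := by
  classical
  refine iSupIndep_iff_supIndep.2 fun s => ?_
  induction s using Finset.induction_on_max_value rank with
  | empty => exact Finset.supIndep_empty f
  | insert i s hi hrank ih =>
    refine ih.insert ((hf i).mono_right (Finset.sup_le fun j hj => ?_))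
    exact le_iSup₂_of_le j ⟨ne_of_mem_of_not_mem hj hi, hrank j hj⟩ le_rfl

/-- Deligne's condition that the decreasing filtrations `F` and `G` are `k`-opposed on the graded
piece `Gr^W_k` for every `k`, formulated in an arbitrary lattice: for `p + q = k + 1` the traces
of `F p` and `G q` on the interval `[W (k - 1), W k]` are complementary. The filtrations `F` and
`G` are required to be bounded above and `W` to be bounded below. -/
structure IsOpposed {α : Type*} [Lattice α] [OrderBot α] (F G W : ℤ → α) : Prop where
  antitone_left : Antitone F
  antitone_right : Antitone G
  monotone_weight : Monotone W
  exists_left_eq_bot : ∃ p, F p = ⊥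
  exists_right_eq_bot : ∃ q, G q = ⊥
  exists_weight_eq_bot : ∃ k, W k = ⊥
  le_sup : ∀ k p q : ℤ, p + q = k + 1 → W k ≤ F p ⊓ W k ⊔ G q ⊓ W k ⊔ W (k - 1)
  inf_le : ∀ k p q : ℤ, p + q = k + 1 →
    (F p ⊓ W k ⊔ W (k - 1)) ⊓ (G q ⊓ W k ⊔ W (k - 1)) ≤ W (k - 1)

section DeligneSplitting

variable {α : Type*} [CompleteLattice α] {F G W : ℤ → α}

/-- The corrected version of `G^q ∩ W_{p+q}` in Deligne's formula, namely
`G^q ∩ W_{p+q} + ∑_{r < q} G^r ∩ W_{p+r-1}`; the customary summand `G^{q-j} ∩ W_{p+q-j-1}` with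
`j ≥ 1` is the one for `r = q - j`. -/
def deligneCorrection (G W : ℤ → α) (p q : ℤ) : α :=
  G q ⊓ W (p + q) ⊔ ⨆ r : ℤ, ⨆ _ : r < q, G r ⊓ W (p + r - 1)

/-- Deligne's bigrading `I^{p,q}` attached to filtrations `F`, `G`, `W`, where `G` plays the role of
the complex conjugate of `F`. -/
def deligneSplitting (F G W : ℤ → α) (p q : ℤ) : α :=
  F p ⊓ W (p + q) ⊓ deligneCorrection G W p q

theorem inf_le_deligneCorrection (p q : ℤ) : G q ⊓ W (p + q) ≤ deligneCorrection G W p q :=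
  le_sup_left

theorem inf_le_deligneCorrection_of_lt {p q r : ℤ} (hr : r < q) :
    G r ⊓ W (p + r - 1) ≤ deligneCorrection G W p q :=
  le_sup_of_le_right (le_iSup₂_of_le r hr le_rfl)

theorem deligneCorrection_le_of_lt (hW : Monotone W) {p p' q q' : ℤ} (hp : p' < p) (hq : q' < q) :
    deligneCorrection G W p' q' ≤ deligneCorrection G W p q :=
  sup_le
    ((inf_le_inf_left _ (hW (by lia))).trans (inf_le_deligneCorrection_of_lt hq))
    (iSup₂_le fun r hr =>
      (inf_le_inf_left _ (hW (by lia))).trans (inf_le_deligneCorrection_of_lt (hr.trans hq)))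

theorem deligneCorrection_le_sup (hG : Antitone G) (hW : Monotone W) {p q k : ℤ}
    (hk : k < p + q) : deligneCorrection G W p q ≤ W (k - 1) ⊔ G (k - p + 1) := by
  refine sup_le (le_sup_of_le_right (inf_le_left.trans (hG (by lia)))) (iSup₂_le fun r _ => ?_)
  rcases lt_or_ge r (k - p + 1) with hr | hr
  · exact le_sup_of_le_left (inf_le_right.trans (hW (by lia)))
  · exact le_sup_of_le_right (inf_le_left.trans (hG hr))

theorem deligneCorrection_le_inf_sup (hW : Monotone W) (p q : ℤ) :
    deligneCorrection G W p q ≤ G q ⊓ W (p + q) ⊔ W (p + q - 1) :=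
  sup_le_sup_left (iSup₂_le fun _ _ => inf_le_right.trans (hW (by lia))) _

theorem deligneSplitting_le_left (p q : ℤ) : deligneSplitting F G W p q ≤ F p :=
  inf_le_left.trans inf_le_left

theorem deligneSplitting_le_weight (p q : ℤ) : deligneSplitting F G W p q ≤ W (p + q) :=
  inf_le_left.trans inf_le_right

theorem deligneSplitting_le_deligneCorrection (p q : ℤ) :
    deligneSplitting F G W p q ≤ deligneCorrection G W p q :=
  inf_le_right

theorem map_deligneSplitting {β : Type*} [CompleteLattice β] (e : α ≃o β) (p q : ℤ) :
    e (deligneSplitting F G W p q) =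
      deligneSplitting (fun a => e (F a)) (fun b => e (G b)) (fun k => e (W k)) p q := by
  simp only [deligneSplitting, deligneCorrection, OrderIso.map_inf, OrderIso.map_sup,
    OrderIso.map_iSup]

theorem le_deligneSplitting (hW : Monotone W) {p q : ℤ} {x : α} (hxF : x ≤ F p)
    (hxW : x ≤ W (p + q)) {J : ℤ → ℤ → α} (hJG : ∀ r s, J r s ≤ G r)
    (hJW : ∀ r s, J r s ≤ W (r + s))
    (hxJ : x ≤ J q p ⊔ ⨆ rs : ℤ × ℤ, ⨆ _ : rs.1 < q ∧ rs.2 < p, J rs.1 rs.2) :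
    x ≤ deligneSplitting F G W p q := by
  refine le_inf (le_inf hxF hxW) (hxJ.trans (sup_le ?_ (iSup₂_le ?_)))
  · have hqp : J q p ≤ G q ⊓ W (p + q) := le_inf (hJG q p) (add_comm q p ▸ hJW q p)
    exact hqp.trans (inf_le_deligneCorrection p q)
  · rintro ⟨r, s⟩ ⟨hr, hs⟩
    have hrs : J r s ≤ G r ⊓ W (p + r - 1) :=
      le_inf (hJG r s) ((hJW r s).trans (hW (by lia)))
    exact hrs.trans (inf_le_deligneCorrection_of_lt hr)

end DeligneSplitting

namespace IsOpposed

theorem symm {α : Type*} [Lattice α] [OrderBot α] {F G W : ℤ → α} (h : IsOpposed F G W) :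
    IsOpposed G F W where
  antitone_left := h.antitone_right
  antitone_right := h.antitone_left
  monotone_weight := h.monotone_weight
  exists_left_eq_bot := h.exists_right_eq_bot
  exists_right_eq_bot := h.exists_left_eq_bot
  exists_weight_eq_bot := h.exists_weight_eq_bot
  le_sup k p q hpq := sup_comm (F q ⊓ W k) _ ▸ h.le_sup k q p (add_comm p q ▸ hpq)
  inf_le k p q hpq := inf_comm (F q ⊓ W k ⊔ W (k - 1)) _ ▸ h.inf_le k q p (add_comm p q ▸ hpq)

variable {α : Type*} [CompleteLattice α] {F G W : ℤ → α}

theorem weight_le_sup_deligneCorrection (h : IsOpposed F G W) {p q k : ℤ} (hk : k < p + q) :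
    W k ≤ F p ⊓ W k ⊔ deligneCorrection G W p q := by
  obtain ⟨K, hK⟩ := h.exists_weight_eq_bot
  induction k using Int.strongRec (m := K) with
  | lt k hkK => exact (h.monotone_weight hkK.le).trans (hK.trans_le bot_le)
  | ge k _ ih =>
    have hG : G (k - p + 1) ⊓ W k ≤ deligneCorrection G W p q := by
      rcases (show k - p + 1 ≤ q by lia).eq_or_lt with hq | hq
      · exact hq ▸ (inf_le_inf_left _ (h.monotone_weight (by lia))).trans
          (inf_le_deligneCorrection p _)
      · exact (inf_le_inf_left _ (h.monotone_weight (by lia))).trans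
          (inf_le_deligneCorrection_of_lt hq)
    have hW : W (k - 1) ≤ F p ⊓ W k ⊔ deligneCorrection G W p q :=
      (ih (k - 1) (by lia) (by lia)).trans
        (sup_le_sup_right (inf_le_inf_left _ (h.monotone_weight (by lia))) _)
    exact (h.le_sup k p (k - p + 1) (by lia)).trans
      (sup_le (sup_le le_sup_left (hG.trans le_sup_right)) hW)

variable [IsModularLattice α]

-- Modular law for `A = F^{p+1} ∩ W_{p+q} + F^p ∩ W_{p+q-1} ⊆ F^p ∩ W_{p+q}`, using
-- `W_{p+q} ⊆ A + U` where `I^{p,q} = F^p ∩ W_{p+q} ∩ U`.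
theorem inf_le_sup_deligneSplitting (h : IsOpposed F G W) (p q : ℤ) :
    F p ⊓ W (p + q) ≤
      F (p + 1) ⊓ W (p + q) ⊔ F p ⊓ W (p + q - 1) ⊔ deligneSplitting F G W p q := by
  set A := F (p + 1) ⊓ W (p + q) ⊔ F p ⊓ W (p + q - 1)
  have hA : A ≤ F p ⊓ W (p + q) :=
    sup_le (inf_le_inf_right _ (h.antitone_left (by lia)))
      (inf_le_inf_left _ (h.monotone_weight (by lia)))
  have hW : W (p + q) ≤ A ⊔ deligneCorrection G W p q := by
    refine (h.le_sup (p + q) (p + 1) q (by ring)).trans (sup_le (sup_le ?_ ?_) ?_)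
    · exact le_sup_left.trans le_sup_left
    · exact (inf_le_deligneCorrection p q).trans le_sup_right
    · exact (h.weight_le_sup_deligneCorrection (by lia)).trans (sup_le_sup_right le_sup_right _)
  calc F p ⊓ W (p + q)
      ≤ (A ⊔ deligneCorrection G W p q) ⊓ (F p ⊓ W (p + q)) :=
        le_inf (inf_le_right.trans hW) le_rfl
    _ = A ⊔ deligneSplitting F G W p q := by
        rw [sup_inf_assoc_of_le _ hA, inf_comm, deligneSplitting]

theorem inf_eq_iSup_deligneSplitting (h : IsOpposed F G W) (p k : ℤ) :
    F p ⊓ W k =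
      ⨆ ab : ℤ × ℤ, ⨆ _ : p ≤ ab.1 ∧ ab.1 + ab.2 ≤ k, deligneSplitting F G W ab.1 ab.2 := by
  refine le_antisymm ?_ (iSup₂_le fun ab hab => le_inf
    ((deligneSplitting_le_left _ _).trans (h.antitone_left hab.1))
    ((deligneSplitting_le_weight _ _).trans (h.monotone_weight hab.2)))
  obtain ⟨P, hP⟩ := h.exists_left_eq_bot
  obtain ⟨K, hK⟩ := h.exists_weight_eq_bot
  induction hd : k - p using Int.strongRec (m := K - P) generalizing p k with
  | lt d hdm =>
    rcases le_or_gt P p with hp | hp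
    · exact inf_le_left.trans ((h.antitone_left hp).trans (hP.trans_le bot_le))
    · exact inf_le_right.trans ((h.monotone_weight (by lia)).trans (hK.trans_le bot_le))
  | ge d _ ih =>
    obtain ⟨q, rfl⟩ : ∃ q, k = p + q := ⟨k - p, by ring⟩
    refine (h.inf_le_sup_deligneSplitting p q).trans (sup_le (sup_le ?_ ?_) ?_)
    · exact (ih _ (by lia) (p + 1) (p + q) rfl).trans
        (biSup_mono fun ab hab => ⟨by lia, hab.2⟩)
    · exact (ih _ (by lia) p (p + q - 1) rfl).trans
        (biSup_mono fun ab hab => ⟨hab.1, by lia⟩)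
    · exact le_iSup₂_of_le (p, q) ⟨le_rfl, le_rfl⟩ le_rfl

theorem left_eq_iSup_deligneSplitting (h : IsOpposed F G W) (hW : ∃ k, W k = ⊤) (p : ℤ) :
    F p = ⨆ ab : ℤ × ℤ, ⨆ _ : p ≤ ab.1, deligneSplitting F G W ab.1 ab.2 := by
  obtain ⟨K, hK⟩ := hW
  refine le_antisymm ?_ (iSup₂_le fun ab hab =>
    (deligneSplitting_le_left _ _).trans (h.antitone_left hab))
  calc F p = F p ⊓ W K := by rw [hK, inf_top_eq]
    _ = _ := h.inf_eq_iSup_deligneSplitting p K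
    _ ≤ _ := biSup_mono fun _ hab => hab.1

theorem weight_eq_iSup_deligneSplitting (h : IsOpposed F G W) (hF : ∃ p, F p = ⊤) (k : ℤ) :
    W k = ⨆ ab : ℤ × ℤ, ⨆ _ : ab.1 + ab.2 ≤ k, deligneSplitting F G W ab.1 ab.2 := by
  obtain ⟨P, hP⟩ := hF
  refine le_antisymm ?_ (iSup₂_le fun ab hab =>
    (deligneSplitting_le_weight _ _).trans (h.monotone_weight hab))
  calc W k = F P ⊓ W k := by rw [hP, top_inf_eq]
    _ = _ := h.inf_eq_iSup_deligneSplitting P k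
    _ ≤ _ := biSup_mono fun _ hab => hab.2

theorem iSup_deligneSplitting_eq_top (h : IsOpposed F G W) (hF : ∃ p, F p = ⊤)
    (hW : ∃ k, W k = ⊤) : ⨆ ab : ℤ × ℤ, deligneSplitting F G W ab.1 ab.2 = ⊤ := by
  obtain ⟨P, hP⟩ := hF
  rw [eq_top_iff, ← hP, h.left_eq_iSup_deligneSplitting hW P]
  exact iSup₂_le fun ab _ => le_iSup (fun ab : ℤ × ℤ => deligneSplitting F G W ab.1 ab.2) ab

-- An element of `F^p ∩ U` in `W_k`, `k < p + q`, agrees modulo `W_{k-1}` with an element of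
-- `G^{k-p+1}`, so it lies in `W_{k-1}` because `F^p` and `G^{k-p+1}` are opposed on `Gr^W_k`.
theorem disjoint_deligneSplitting_weight (h : IsOpposed F G W) (p q : ℤ) :
    Disjoint (deligneSplitting F G W p q) (W (p + q - 1)) := by
  set D := deligneSplitting F G W p q ⊓ W (p + q - 1)
  have hdescend (k : ℤ) (hk : k < p + q) (hD : D ≤ W k) : D ≤ W (k - 1) := by
    have hF : D ≤ F p ⊓ W k :=
      le_inf (inf_le_left.trans (deligneSplitting_le_left p q)) hD
    have hG : D ≤ G (k - p + 1) ⊓ W k ⊔ W (k - 1) := by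
      rw [sup_comm, ← sup_inf_assoc_of_le _ (h.monotone_weight (sub_le_self k zero_le_one))]
      refine le_inf (inf_le_left.trans ?_) hD
      exact (deligneSplitting_le_deligneCorrection p q).trans
        (deligneCorrection_le_sup h.antitone_right h.monotone_weight hk)
    exact (le_inf (hF.trans le_sup_left) hG).trans (h.inf_le k p _ (by ring))
  have hall (k : ℤ) (hk : k ≤ p + q - 1) : D ≤ W k := by
    induction k, hk using Int.leInductionDown with
    | base => exact inf_le_right
    | pred k hk ih => exact hdescend k (by lia) ih
  obtain ⟨K, hK⟩ := h.exists_weight_eq_bot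
  rw [disjoint_iff_inf_le]
  exact (hall (min K (p + q - 1)) (min_le_right _ _)).trans
    ((h.monotone_weight (min_le_left _ _)).trans hK.le)

theorem disjoint_deligneSplitting_sup (h : IsOpposed F G W) (p q : ℤ) :
    Disjoint (deligneSplitting F G W p q) (F (p + 1) ⊓ W (p + q) ⊔ W (p + q - 1)) := by
  have hG : deligneSplitting F G W p q ≤ G q ⊓ W (p + q) ⊔ W (p + q - 1) :=
    (deligneSplitting_le_deligneCorrection p q).trans
      (deligneCorrection_le_inf_sup h.monotone_weight p q)
  have hW : deligneSplitting F G W p q ⊓ (F (p + 1) ⊓ W (p + q) ⊔ W (p + q - 1)) ≤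
      W (p + q - 1) :=
    (le_inf inf_le_right (inf_le_left.trans hG)).trans (h.inf_le (p + q) (p + 1) q (by ring))
  exact disjoint_iff_inf_le.2
    ((le_inf inf_le_left hW).trans (h.disjoint_deligneSplitting_weight p q).le_bot)

-- The pieces are ordered by increasing weight and, within a weight, by decreasing Hodge index `p`.
theorem iSupIndep_deligneSplitting [IsCompactlyGenerated α] (h : IsOpposed F G W) :
    iSupIndep fun ab : ℤ × ℤ => deligneSplitting F G W ab.1 ab.2 := by
  refine iSupIndep_of_disjoint_iSup_le (fun ab => toLex (ab.1 + ab.2, -ab.1)) fun ⟨p, q⟩ =>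
    (h.disjoint_deligneSplitting_sup p q).mono_right (iSup₂_le ?_)
  rintro ⟨a, b⟩ ⟨hne, hle⟩
  rcases Prod.Lex.toLex_le_toLex.1 hle with hlt | ⟨heq, hle⟩
  · exact (deligneSplitting_le_weight a b).trans
      ((h.monotone_weight (by grind)).trans le_sup_right)
  · refine le_trans (le_inf ?_ ?_) le_sup_left
    · exact (deligneSplitting_le_left a b).trans (h.antitone_left (by grind))
    · exact (deligneSplitting_le_weight a b).trans (h.monotone_weight (by grind))

theorem deligneCorrection_le_sup_iSup_deligneSplitting (h : IsOpposed F G W) (p q : ℤ) :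
    deligneCorrection G W p q ≤ G q ⊓ W (p + q) ⊔
      ⨆ rs : ℤ × ℤ, ⨆ _ : rs.1 < q ∧ rs.2 < p, deligneSplitting G F W rs.1 rs.2 := by
  refine sup_le le_sup_left (iSup₂_le fun r hr => ?_)
  rw [h.symm.inf_eq_iSup_deligneSplitting]
  refine iSup₂_le fun ⟨a, b⟩ hab => ?_
  rcases lt_or_ge a q with haq | hqa
  · exact le_sup_of_le_right (le_iSup₂_of_le (a, b) ⟨haq, by grind⟩ le_rfl)
  · refine le_trans (le_inf ?_ ?_) le_sup_left
    · exact (deligneSplitting_le_left a b).trans (h.antitone_right hqa)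
    · exact (deligneSplitting_le_weight a b).trans (h.monotone_weight (by grind))

theorem deligneSplitting_le_sup_swap (h : IsOpposed F G W) (p q : ℤ) :
    deligneSplitting F G W p q ≤ deligneSplitting G F W q p ⊔
      ⨆ rs : ℤ × ℤ, ⨆ _ : rs.1 < q ∧ rs.2 < p, deligneSplitting G F W rs.1 rs.2 := by
  set J := ⨆ rs : ℤ × ℤ, ⨆ _ : rs.1 < q ∧ rs.2 < p, deligneSplitting G F W rs.1 rs.2
  have hJ : J ≤ deligneCorrection F W q p := iSup₂_le fun rs hrs =>
    (deligneSplitting_le_deligneCorrection _ _).trans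
      (deligneCorrection_le_of_lt h.monotone_weight hrs.1 hrs.2)
  have hF : deligneSplitting F G W p q ≤ deligneCorrection F W q p :=
    inf_le_left.trans (add_comm p q ▸ inf_le_deligneCorrection q p)
  have hG : deligneSplitting F G W p q ≤ G q ⊓ W (q + p) ⊔ J :=
    add_comm p q ▸ inf_le_right.trans (h.deligneCorrection_le_sup_iSup_deligneSplitting p q)
  calc deligneSplitting F G W p q
      ≤ (J ⊔ G q ⊓ W (q + p)) ⊓ deligneCorrection F W q p := le_inf (sup_comm J _ ▸ hG) hF
    _ = deligneSplitting G F W q p ⊔ J := by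
        rw [sup_inf_assoc_of_le _ hJ, sup_comm, deligneSplitting]

end IsOpposed

namespace Conjugation

variable {V : Type*} [AddCommGroup V] [Module ℂ V] (c : Conjugation V)

theorem mem_submap {S : Submodule ℂ V} {v : V} : v ∈ c.submap S ↔ c.toFun v ∈ S :=
  ⟨by rintro ⟨x, hx, rfl⟩; rwa [c.invol], fun hv => ⟨c.toFun v, hv, c.invol v⟩⟩

theorem submap_submap (S : Submodule ℂ V) : c.submap (c.submap S) = S := by
  ext v
  rw [mem_submap, mem_submap, c.invol]

/-- `Conjugation.submap` as an automorphism of the lattice of complex subspaces. -/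
def submapOrderIso : Submodule ℂ V ≃o Submodule ℂ V where
  toFun := c.submap
  invFun := c.submap
  left_inv := c.submap_submap
  right_inv := c.submap_submap
  map_rel_iff' := Set.image_subset_image_iff
    (Function.LeftInverse.injective c.invol)

theorem submap_mono : Monotone c.submap :=
  c.submapOrderIso.monotone

theorem submap_bot : c.submap ⊥ = ⊥ :=
  c.submapOrderIso.map_bot

theorem submap_sup (S T : Submodule ℂ V) : c.submap (S ⊔ T) = c.submap S ⊔ c.submap T :=
  c.submapOrderIso.map_sup S T

theorem submap_iSup {ι : Sort*} (S : ι → Submodule ℂ V) :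
    c.submap (⨆ i, S i) = ⨆ i, c.submap (S i) :=
  c.submapOrderIso.map_iSup S

theorem submap_eq_self {S : Submodule ℂ V} (hS : ∀ v ∈ S, c.toFun v ∈ S) : c.submap S = S :=
  le_antisymm (Set.image_subset_iff.2 hS) fun v hv => c.mem_submap.2 (hS v hv)

end Conjugation

section MixedHodge

variable {V : Type*} [AddCommGroup V] [Module ℂ V] {c : Conjugation V} {F W : ℤ → Submodule ℂ V}

theorem IsMHS.isOpposed (h : IsMHS c F W) : IsOpposed F (fun q => c.submap (F q)) W where
  antitone_left := h.antitone_F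
  antitone_right := c.submap_mono.comp_antitone h.antitone_F
  monotone_weight := h.monotone_W
  exists_left_eq_bot := h.exists_F_bot
  exists_right_eq_bot := h.exists_F_bot.imp fun p hp => by rw [hp, c.submap_bot]
  exists_weight_eq_bot := h.exists_W_bot
  le_sup k p q hpq := by
    obtain rfl : q = k - p + 1 := by lia
    have hsup := congrArg (Submodule.comap (W (k - 1)).mkQ) (h.graded_sup k p)
    rw [← Submodule.map_sup, Submodule.comap_map_mkQ, Submodule.comap_map_mkQ, sup_comm] at hsup
    exact le_sup_right.trans hsup.ge
  inf_le k p q hpq := by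
    obtain rfl : q = k - p + 1 := by lia
    have hinf := congrArg (Submodule.comap (W (k - 1)).mkQ) (h.graded_inf k p)
    rw [Submodule.comap_inf, Submodule.comap_map_mkQ, Submodule.comap_map_mkQ,
      Submodule.comap_bot, Submodule.ker_mkQ, sup_comm, sup_comm (W (k - 1))] at hinf
    exact hinf.le

theorem IsMHS.submap_deligneSplitting (h : IsMHS c F W) (p q : ℤ) :
    c.submap (deligneSplitting F (fun b => c.submap (F b)) W p q) =
      deligneSplitting (fun b => c.submap (F b)) F W p q := by
  refine (map_deligneSplitting c.submapOrderIso p q).trans ?_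
  congr 1
  · exact funext fun b => c.submap_submap (F b)
  · exact funext fun k => c.submap_eq_self (h.real_W k)

theorem IsMHS.isDeligneBigrading (h : IsMHS c F W) :
    IsDeligneBigrading c F W (deligneSplitting F (fun q => c.submap (F q)) W) where
  internal := DirectSum.isInternal_submodule_of_iSupIndep_of_iSup_eq_top
    h.isOpposed.iSupIndep_deligneSplitting
    (h.isOpposed.iSup_deligneSplitting_eq_top h.exists_F_top h.exists_W_top)
  hF := h.isOpposed.left_eq_iSup_deligneSplitting h.exists_W_top
  hW := h.isOpposed.weight_eq_iSup_deligneSplitting h.exists_F_top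
  conj_cond p q v hv := by
    rw [← c.mem_submap]
    simp only [c.submap_sup, c.submap_iSup, h.submap_deligneSplitting]
    exact h.isOpposed.deligneSplitting_le_sup_swap p q hv

namespace IsDeligneBigrading

variable {J : ℤ → ℤ → Submodule ℂ V}

theorem le_F (hJ : IsDeligneBigrading c F W J) (p q : ℤ) : J p q ≤ F p := by
  rw [hJ.hF p]
  exact le_iSup₂_of_le (p, q) le_rfl le_rfl

theorem le_W (hJ : IsDeligneBigrading c F W J) (p q : ℤ) : J p q ≤ W (p + q) := by
  rw [hJ.hW (p + q)]
  exact le_iSup₂_of_le (p, q) le_rfl le_rfl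

theorem le_sup_submap (hJ : IsDeligneBigrading c F W J) (p q : ℤ) :
    J p q ≤ c.submap (J q p) ⊔
      ⨆ rs : ℤ × ℤ, ⨆ _ : rs.1 < q ∧ rs.2 < p, c.submap (J rs.1 rs.2) := by
  simp only [← c.submap_iSup, ← c.submap_sup]
  exact fun v hv => c.mem_submap.2 (hJ.conj_cond p q v hv)

theorem eq_deligneSplitting (hJ : IsDeligneBigrading c F W J) (h : IsMHS c F W) :
    J = deligneSplitting F (fun q => c.submap (F q)) W := by
  have hle (pq : ℤ × ℤ) : J pq.1 pq.2 ≤ deligneSplitting F (fun q => c.submap (F q)) W pq.1 pq.2 :=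
    le_deligneSplitting h.monotone_W (hJ.le_F _ _) (hJ.le_W _ _)
      (fun r s => c.submap_mono (hJ.le_F r s))
      (fun r s => (c.submap_mono (hJ.le_W r s)).trans (c.submap_eq_self (h.real_W _)).le)
      (hJ.le_sup_submap pq.1 pq.2)
  have heq := (h.isOpposed.iSupIndep_deligneSplitting.le_iff_eq_of_iSup_eq_top
    hJ.internal.submodule_iSup_eq_top).1 hle
  exact funext₂ fun p q => congrFun heq (p, q)

end IsDeligneBigrading

end MixedHodge

theorem deligne_bigrading_existsUnique_general
    {V : Type*} [AddCommGroup V] [Module ℂ V]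
    (c : Conjugation V) (F W : ℤ → Submodule ℂ V) (h : IsMHS c F W) :
    ∃! I : ℤ → ℤ → Submodule ℂ V, IsDeligneBigrading c F W I :=
  ⟨deligneSplitting F (fun q => c.submap (F q)) W, h.isDeligneBigrading,
    fun _ hJ => hJ.eq_deligneSplitting h⟩

/-- **Deligne's theorem.** Every mixed Hodge structure `(F,W)` on `V` admits a
unique bigrading `V = ⊕_{p,q} I^{p,q}` with `F^p = ⊕_{a ≥ p} I^{a,b}`,
`W_k = ⊕_{a+b ≤ k} I^{a,b}` and `conj (I^{p,q}) ⊆ I^{q,p} + ⊕_{r<q,s<p} I^{r,s}`. -/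
theorem deligne_bigrading_existsUnique
    {V : Type*} [AddCommGroup V] [Module ℂ V] [FiniteDimensional ℂ V]
    (c : Conjugation V) (F W : ℤ → Submodule ℂ V) (h : IsMHS c F W) :
    ∃! I : ℤ → ℤ → Submodule ℂ V, IsDeligneBigrading c F W I :=
  deligne_bigrading_existsUnique_general c F W h
end
end

section
/- Let (F,W) be a mixed Hodge structure on V. Then there exists a unique real element δ ∈ Λ_{(F,W)} (i.e., δ commutes with conjugation) such that (exp(−iδ)·F, W) is a mixed Hodge structure that is split over ℝ. -/
open Complex

noncomputable section

/-- The bidegree-`(r,s)` part `gl^{r,s}` of `End(V)` induced by a bigrading `I` of `V`. -/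
def glrs {V : Type*} [AddCommGroup V] [Module ℂ V]
    (I : ℤ → ℤ → Submodule ℂ V) (r s : ℤ) : Submodule ℂ (Module.End ℂ V) where
  carrier := {α | ∀ p q : ℤ, ∀ v ∈ I p q, α v ∈ I (p + r) (q + s)}
  add_mem' := by
    intro α β hα hβ p q v hv
    simpa [LinearMap.add_apply] using
      Submodule.add_mem _ (hα p q v hv) (hβ p q v hv)
  zero_mem' := by
    intro p q v hv
    simp
  smul_mem' := by
    intro t α hα p q v hv
    simpa [LinearMap.smul_apply] using Submodule.smul_mem _ t (hα p q v hv)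

/-- `Λ_{(F,W)} = ⊕_{r<0, s<0} gl^{r,s}`, computed from the bigrading `I` of `(F,W)`. -/
def Lambda {V : Type*} [AddCommGroup V] [Module ℂ V]
    (I : ℤ → ℤ → Submodule ℂ V) : Submodule ℂ (Module.End ℂ V) :=
  ⨆ rs : ℤ × ℤ, ⨆ _ : rs.1 < 0 ∧ rs.2 < 0, glrs I rs.1 rs.2

/-- The exponential of an endomorphism of a finite-dimensional space, given as the
finite sum `Σ_{n ≤ dim V} α^n / n!`; it agrees with the analytic exponential whenever
`α` is nilpotent (as is every element of `Λ_{(F,W)}`). -/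
def expNil {V : Type*} [AddCommGroup V] [Module ℂ V] [FiniteDimensional ℂ V]
    (α : Module.End ℂ V) : Module.End ℂ V :=
  ∑ n ∈ Finset.range (Module.finrank ℂ V + 1), ((n.factorial : ℂ))⁻¹ • α ^ n

/-!
Some `g ∈ 1 + Λ` corrects conjugation so that `conj ∘ g` exchanges `I^{p,q}` and `I^{q,p}`. An
element of `1 + Λ` that preserves every `I^{p,q}` is the identity, so `g` is unique and `ḡ g = 1`.

For a real `δ ∈ Λ` put `E = exp(-iδ)`. Since `Λ` lowers weights, `E` acts trivially on `Gr^W`, so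
`(E F, W)` is again a mixed Hodge structure, and its Deligne bigrading is `E I`. As `Ē = E⁻¹`, this
bigrading is split exactly when `conj ∘ E²` exchanges `I^{p,q}` and `I^{q,p}`, that is, when
`exp(-2iδ) = g`. The exponential `Λ → 1 + Λ` is bijective, so this equation has a unique solution
`δ ∈ Λ`, and `ḡ g = 1` forces `log g` to be purely imaginary, i.e. `δ` to be real.
-/

section NilpotentSubmodule

variable {R A : Type*} [CommRing R] [Ring A] [Algebra R A] {L : Submodule R A}

theorem pow_le_pow_of_mul_self_le (hL : L * L ≤ L) {m n : ℕ} (hm : 1 ≤ m) (hmn : m ≤ n) :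
    L ^ n ≤ L ^ m := by
  obtain ⟨k, rfl⟩ := Nat.exists_eq_add_of_le' hm
  induction n, hmn using Nat.le_induction with
  | base => exact le_rfl
  | succ n hn ih =>
    refine le_trans ?_ ih
    obtain ⟨j, rfl⟩ := Nat.exists_eq_add_of_le' (hm.trans hn)
    calc L ^ (j + 1 + 1) = L ^ j * (L * L) := by rw [pow_succ, pow_succ, mul_assoc]
      _ ≤ L ^ j * L := mul_le_mul' le_rfl hL
      _ = L ^ (j + 1) := (pow_succ L j).symm

theorem pow_succ_sub_pow_succ_mem {X Y : A} (hX : X ∈ L) (hY : Y ∈ L) {m : ℕ}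
    (hXY : X - Y ∈ L ^ m) (n : ℕ) : X ^ (n + 1) - Y ^ (n + 1) ∈ L ^ (m + n) := by
  induction n with
  | zero => simpa using hXY
  | succ n ih =>
    have telescope : X ^ (n + 2) - Y ^ (n + 2) =
        X ^ (n + 1) * (X - Y) + (X ^ (n + 1) - Y ^ (n + 1)) * Y := by
      rw [pow_succ X (n + 1), pow_succ Y (n + 1)]
      noncomm_ring
    rw [telescope, ← add_assoc]
    refine add_mem ?_ ?_
    · rw [add_assoc, add_comm, pow_add]
      exact Submodule.mul_mem_mul (Submodule.pow_mem_pow L hX _) hXY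
    · rw [pow_succ]
      exact Submodule.mul_mem_mul ih hY

theorem exists_pow_succ_eq_bot (hL : IsNilpotent L) : ∃ N, L ^ (N + 1) = ⊥ := by
  obtain ⟨N, hN⟩ := hL
  exact ⟨N, by rw [pow_succ, hN, zero_mul, Submodule.zero_eq_bot]⟩

theorem isNilpotent_of_mem (hL : IsNilpotent L) {X : A} (hX : X ∈ L) : IsNilpotent X := by
  obtain ⟨N, hN⟩ := hL
  refine ⟨N, ?_⟩
  simpa [hN] using Submodule.pow_mem_pow L hX N

theorem isNilpotent_of_le {L' : Submodule R A} (hL : IsNilpotent L) (hle : L' ≤ L) :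
    IsNilpotent L' := by
  obtain ⟨N, hN⟩ := hL
  exact ⟨N, le_bot_iff.1 ((pow_le_pow_left' hle N).trans_eq hN)⟩

theorem isUnit_of_sub_one_mem (hL : IsNilpotent L) {g : A} (hg : g - 1 ∈ L) : IsUnit g := by
  simpa using (isNilpotent_of_mem hL hg).isUnit_add_one

theorem mul_sub_one_mem (hL : L * L ≤ L) {g g' : A} (hg : g - 1 ∈ L) (hg' : g' - 1 ∈ L) :
    g * g' - 1 ∈ L := by
  have expand : g * g' - 1 = (g - 1) * (g' - 1) + (g - 1) + (g' - 1) := by noncomm_ring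
  rw [expand]
  exact add_mem (add_mem (hL (Submodule.mul_mem_mul hg hg')) hg) hg'

end NilpotentSubmodule

section Exponential

variable {V : Type*} [AddCommGroup V] [Module ℂ V] [FiniteDimensional ℂ V]
  {L : Submodule ℂ (Module.End ℂ V)} {X Y : Module.End ℂ V}

theorem expNil_eq_isNilpotentExp [Module ℚ (Module.End ℂ V)] (hX : IsNilpotent X) :
    expNil X = IsNilpotent.exp X := by
  have hpow : X ^ (Module.finrank ℂ V + 1) = 0 := by
    have cayleyHamilton := LinearMap.aeval_self_charpoly X
    rw [hX.charpoly_eq_X_pow_finrank] at cayleyHamilton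
    rw [pow_succ, ← Polynomial.aeval_X_pow (R := ℂ) X, cayleyHamilton, zero_mul]
  rw [IsNilpotent.exp_eq_sum hpow, expNil]
  refine Finset.sum_congr rfl fun n _ => ?_
  simpa using ratCast_smul_eq ℂ ℚ ((n.factorial : ℚ)⁻¹) (X ^ n)

theorem expNil_add_of_commute (hXY : Commute X Y) (hX : IsNilpotent X) (hY : IsNilpotent Y) :
    expNil (X + Y) = expNil X * expNil Y := by
  let _ : Module ℚ (Module.End ℂ V) := Module.compHom _ (algebraMap ℚ ℂ)
  rw [expNil_eq_isNilpotentExp hX, expNil_eq_isNilpotentExp hY,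
    expNil_eq_isNilpotentExp (hXY.isNilpotent_add hX hY),
    IsNilpotent.exp_add_of_commute hXY hX hY]

theorem expNil_zero : expNil (0 : Module.End ℂ V) = 1 := by
  let _ : Module ℚ (Module.End ℂ V) := Module.compHom _ (algebraMap ℚ ℂ)
  rw [expNil_eq_isNilpotentExp IsNilpotent.zero, IsNilpotent.exp_zero]

theorem expNil_mul_expNil_neg (hX : IsNilpotent X) : expNil X * expNil (-X) = 1 := by
  rw [← expNil_add_of_commute (Commute.neg_right (Commute.refl X)) hX hX.neg, add_neg_cancel,
    expNil_zero]

theorem expNil_eq_one_add_add_sum (X : Module.End ℂ V) :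
    expNil X = 1 + X + ∑ n ∈ Finset.range (Module.finrank ℂ V - 1),
      ((n + 2).factorial : ℂ)⁻¹ • X ^ (n + 2) := by
  rcases Nat.eq_zero_or_pos (Module.finrank ℂ V) with hzero | hpos
  · have : Subsingleton V := Module.finrank_zero_iff.1 hzero
    exact Subsingleton.elim _ _
  · obtain ⟨d, hd⟩ := Nat.exists_eq_add_of_le' hpos
    rw [expNil, hd, Finset.sum_range_succ', Finset.sum_range_succ']
    simp only [add_tsub_cancel_right, Nat.factorial, zero_add, Nat.cast_one, inv_one, pow_one,
      pow_zero, one_smul, mul_one]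
    abel

theorem expNil_sub_one_mem (hL : L * L ≤ L) (hX : X ∈ L) : expNil X - 1 ∈ L := by
  rw [expNil_eq_one_add_add_sum, add_assoc, add_sub_cancel_left]
  refine add_mem hX (Submodule.sum_mem _ fun n _ => Submodule.smul_mem _ _ ?_)
  simpa using pow_le_pow_of_mul_self_le hL le_rfl (by omega) (Submodule.pow_mem_pow L hX (n + 2))

/-- `exp` agrees with the identity to first order along the filtration by powers of `L`, so that
successive approximation yields both injectivity and surjectivity in `bijOn_expNil`. -/
theorem expNil_sub_expNil_sub_mem (hL : L * L ≤ L) (hX : X ∈ L) (hY : Y ∈ L) {m : ℕ}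
    (hXY : X - Y ∈ L ^ m) : expNil X - expNil Y - (X - Y) ∈ L ^ (m + 1) := by
  have expand : expNil X - expNil Y - (X - Y) = ∑ n ∈ Finset.range (Module.finrank ℂ V - 1),
      ((n + 2).factorial : ℂ)⁻¹ • (X ^ (n + 2) - Y ^ (n + 2)) := by
    simp only [expNil_eq_one_add_add_sum, smul_sub, Finset.sum_sub_distrib]
    abel
  rw [expand]
  exact Submodule.sum_mem _ fun n _ => Submodule.smul_mem _ _ <|
    pow_le_pow_of_mul_self_le hL (by omega) (by omega)
      (pow_succ_sub_pow_succ_mem hX hY hXY (n + 1))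

theorem injOn_expNil (hL : L * L ≤ L) (hnil : IsNilpotent L) :
    Set.InjOn expNil (L : Set (Module.End ℂ V)) := by
  intro X hX Y hY hexp
  have approx (m : ℕ) : X - Y ∈ L ^ (m + 1) := by
    induction m with
    | zero => simpa using sub_mem hX hY
    | succ m ih =>
      simpa [hexp] using neg_mem (expNil_sub_expNil_sub_mem hL hX hY ih)
  obtain ⟨N, hN⟩ := exists_pow_succ_eq_bot hnil
  exact sub_eq_zero.1 ((Submodule.mem_bot ℂ).1 (hN ▸ approx N))

theorem exists_expNil_eq (hL : L * L ≤ L) (hnil : IsNilpotent L) {g : Module.End ℂ V}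
    (hg : g - 1 ∈ L) : ∃ X ∈ L, expNil X = g := by
  have approx (m : ℕ) : ∃ X ∈ L, g - expNil X ∈ L ^ (m + 1) := by
    induction m with
    | zero => exact ⟨0, zero_mem _, by simpa [expNil_zero] using hg⟩
    | succ m ih =>
      obtain ⟨X, hX, herr⟩ := ih
      have herrL : g - expNil X ∈ L := by
        simpa using pow_le_pow_of_mul_self_le hL le_rfl (by omega) herr
      refine ⟨X + (g - expNil X), add_mem hX herrL, ?_⟩
      have hnext := expNil_sub_expNil_sub_mem hL (add_mem hX herrL) hX (by simpa using herr)
      convert neg_mem hnext using 1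
      abel
  obtain ⟨N, hN⟩ := exists_pow_succ_eq_bot hnil
  obtain ⟨X, hX, herr⟩ := approx N
  exact ⟨X, hX, (sub_eq_zero.1 ((Submodule.mem_bot ℂ).1 (hN ▸ herr))).symm⟩

theorem bijOn_expNil (hL : L * L ≤ L) (hnil : IsNilpotent L) :
    Set.BijOn expNil (L : Set (Module.End ℂ V)) {g | g - 1 ∈ L} :=
  ⟨fun _ => expNil_sub_one_mem hL, injOn_expNil hL hnil, fun _ => exists_expNil_eq hL hnil⟩

end Exponential

section Independence

variable {α ι : Type*} [CompleteLattice α] {A B : ι → α}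

theorem biSup_inf_biSup_of_iSupIndep [IsModularLattice α] [IsCompactlyGenerated α]
    (hA : iSupIndep A) (s t : Set ι) :
    (⨆ i ∈ s, A i) ⊓ (⨆ i ∈ t, A i) = ⨆ i ∈ s ∩ t, A i := by
  have hle : ⨆ i ∈ s ∩ t, A i ≤ ⨆ i ∈ t, A i := biSup_mono fun _ hi => hi.2
  have hdisj : (⨆ i ∈ s \ t, A i) ⊓ (⨆ i ∈ t, A i) = ⊥ :=
    (hA.disjoint_biSup_biSup Set.disjoint_sdiff_left).eq_bot
  rw [← Set.inter_union_sdiff s t, iSup_union, sup_inf_assoc_of_le _ hle, hdisj, sup_bot_eq,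
    Set.inter_union_sdiff]

theorem eq_of_le_of_iSup_eq_top [IsModularLattice α] (hA : iSupIndep A) (hBA : B ≤ A)
    (hB : ⨆ i, B i = ⊤) : B = A := by
  funext i
  have hcover : B i ⊔ ⨆ j ≠ i, B j = ⊤ := by rw [← hB, iSup_split_single B i]
  have hdisj : (⨆ j ≠ i, B j) ⊓ A i = ⊥ :=
    ((hA i).mono_right (iSup₂_mono fun j _ => hBA j)).symm.eq_bot
  rw [← top_inf_eq (A i), ← hcover, sup_inf_assoc_of_le _ (hBA i), hdisj, sup_bot_eq]

theorem exists_finset_forall_notMem_eq_bot [WellFoundedGT α] (hA : iSupIndep A) :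
    ∃ S : Finset ι, ∀ i ∉ S, A i = ⊥ := by
  have hfin := WellFoundedGT.finite_ne_bot_of_iSupIndep hA
  exact ⟨hfin.toFinset, fun i hi => by simpa using hi⟩

end Independence

section LinearAlgebra

variable {R M N ι : Type*} [Ring R] [AddCommGroup M] [Module R M] [AddCommGroup N] [Module R N]
  {A : ι → Submodule R M}

theorem linearMap_ext_of_iSup_eq_top (hA : ⨆ i, A i = ⊤) {f g : M →ₗ[R] N}
    (hfg : ∀ i, ∀ v ∈ A i, f v = g v) : f = g :=
  LinearMap.eqLocus_eq_top.1 (top_le_iff.1 (hA ▸ iSup_le fun i v hv => hfg i v hv))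

theorem isInternal_map [DecidableEq ι] {E : M →ₗ[R] N} (hE : Function.Bijective E)
    (hA : DirectSum.IsInternal A) : DirectSum.IsInternal fun i => (A i).map E := by
  refine DirectSum.isInternal_submodule_of_iSupIndep_of_iSup_eq_top
    (hA.submodule_iSupIndep.map_orderIso (Submodule.orderIsoMapComapOfBijective E hE)) ?_
  rw [← Submodule.map_iSup, hA.submodule_iSup_eq_top, Submodule.map_top,
    LinearMap.range_eq_top.2 hE.surjective]

variable [DecidableEq ι]

/-- The projection of `M = ⨁ i, A i` onto the summand `A i`, as an endomorphism of `M`. -/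
def gradedProj (hA : DirectSum.IsInternal A) (i : ι) : M →ₗ[R] M :=
  (A i).subtype ∘ₗ DirectSum.component R ι (fun i => A i) i ∘ₗ
    (LinearEquiv.ofBijective (DirectSum.coeLinearMap A) hA).symm.toLinearMap

theorem gradedProj_mem (hA : DirectSum.IsInternal A) (i : ι) (v : M) :
    gradedProj hA i v ∈ A i :=
  Subtype.prop _

theorem gradedProj_of_mem (hA : DirectSum.IsInternal A) {i : ι} {v : M} (hv : v ∈ A i) :
    gradedProj hA i v = v :=
  congrArg Subtype.val (hA.ofBijective_coeLinearMap_of_mem hv)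

theorem gradedProj_of_mem_ne (hA : DirectSum.IsInternal A) {i j : ι} (hij : i ≠ j) {v : M}
    (hv : v ∈ A i) : gradedProj hA j v = 0 :=
  congrArg Subtype.val (hA.ofBijective_coeLinearMap_of_mem_ne hij hv)

theorem exists_sum_gradedProj_eq_one [IsNoetherian R M] (hA : DirectSum.IsInternal A) :
    ∃ S : Finset ι, ∑ i ∈ S, gradedProj hA i = (1 : Module.End R M) := by
  obtain ⟨S, hS⟩ := exists_finset_forall_notMem_eq_bot hA.submodule_iSupIndep
  refine ⟨S, linearMap_ext_of_iSup_eq_top hA.submodule_iSup_eq_top fun i v hv => ?_⟩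
  rw [LinearMap.sum_apply, Finset.sum_eq_single i
    (fun j _ hji => gradedProj_of_mem_ne hA hji.symm hv), gradedProj_of_mem hA hv,
    Module.End.one_apply]
  intro hi
  rw [hS i hi] at hv
  rw [(Submodule.mem_bot R).1 hv, map_zero]

end LinearAlgebra

theorem map_eq_self_of_le_comap {K U : Type*} [Field K] [AddCommGroup U] [Module K U]
    [FiniteDimensional K U] {E : Module.End K U} (hE : Function.Injective E) {T : Submodule K U}
    (hT : T ≤ T.comap E) : T.map E = T :=
  Submodule.eq_of_le_of_finrank_eq (Submodule.map_le_iff_le_comap.2 hT)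
    (Submodule.equivMapOfInjective E hE T).finrank_eq.symm

section Lowering

variable {R M : Type*} [CommRing R] [AddCommGroup M] [Module R M] {W : ℤ → Submodule R M}

/-- The endomorphisms that lower the filtration `W` by one step; for a finite increasing `W`
they form a nilpotent ideal in the algebra of endomorphisms that preserve `W`. -/
def lowering (W : ℤ → Submodule R M) : Submodule R (Module.End R M) :=
  ⨅ k, Submodule.compatibleMaps (W k) (W (k - 1))

theorem mem_lowering {α : Module.End R M} :
    α ∈ lowering W ↔ ∀ k, ∀ v ∈ W k, α v ∈ W (k - 1) :=
  Submodule.mem_iInf _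

theorem lowering_pow_le (n : ℕ) :
    lowering W ^ n ≤ ⨅ k, Submodule.compatibleMaps (W k) (W (k - n)) := by
  induction n with
  | zero =>
    rw [pow_zero, Submodule.one_le, Submodule.mem_iInf]
    intro k v hv
    simpa using hv
  | succ n ih =>
    rw [pow_succ, Submodule.mul_le]
    intro α hα β hβ
    rw [Submodule.mem_iInf]
    intro k v hv
    have hαβ := (Submodule.mem_iInf _).1 (ih hα) (k - 1) (mem_lowering.1 hβ k v hv)
    rwa [sub_sub, add_comm, ← Nat.cast_succ] at hαβ

theorem isNilpotent_lowering (hmono : Monotone W) (hbot : ∃ k, W k = ⊥) (htop : ∃ k, W k = ⊤) :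
    IsNilpotent (lowering W) := by
  obtain ⟨a, ha⟩ := hbot
  obtain ⟨b, hb⟩ := htop
  refine ⟨(b - a).toNat, le_bot_iff.1 fun α hα => (Submodule.mem_bot R).2 ?_⟩
  ext v
  have hv := (Submodule.mem_iInf _).1 (lowering_pow_le _ hα) b (hb ▸ Submodule.mem_top : v ∈ W b)
  have hle : W (b - ((b - a).toNat : ℤ)) ≤ ⊥ := ha ▸ hmono (by omega)
  exact (Submodule.mem_bot R).1 (hle hv)

end Lowering

section UnipotentFiltration

variable {K U : Type*} [Field K] [AddCommGroup U] [Module K U] [FiniteDimensional K U]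
  {W : ℤ → Submodule K U} {E : Module.End K U}

theorem map_eq_of_sub_one_mem_lowering (hmono : Monotone W) (hE : E - 1 ∈ lowering W)
    (hinj : Function.Injective E) (k : ℤ) : (W k).map E = W k := by
  refine map_eq_self_of_le_comap hinj fun v hv => ?_
  have hEv : E v = (E - 1) v + v := by simp
  rw [Submodule.mem_comap, hEv]
  exact add_mem (hmono (by omega) (mem_lowering.1 hE k v hv)) hv

theorem map_mkQ_map_inf_of_sub_one_mem_lowering (hmono : Monotone W) (hE : E - 1 ∈ lowering W)
    (hinj : Function.Injective E) (T : Submodule K U) (k : ℤ) :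
    (T.map E ⊓ W k).map (W (k - 1)).mkQ = (T ⊓ W k).map (W (k - 1)).mkQ := by
  have hfix : Set.EqOn ((W (k - 1)).mkQ ∘ₗ E) (W (k - 1)).mkQ (T ⊓ W k : Submodule K U) :=
    fun v hv => (Submodule.Quotient.eq _).2 (mem_lowering.1 hE k v hv.2)
  rw [← map_eq_of_sub_one_mem_lowering hmono hE hinj k, ← Submodule.map_inf _ hinj,
    ← Submodule.map_comp, map_eq_of_sub_one_mem_lowering hmono hE hinj k]
  exact SetLike.coe_injective (Set.image_congr hfix)

end UnipotentFiltration

namespace Conjugation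

variable {V : Type*} [AddCommGroup V] [Module ℂ V] (c : Conjugation V)

/-- Conjugation `α ↦ ᾱ` of endomorphisms, `ᾱ v = conj (α (conj v))`; its fixed points are the
real endomorphisms. -/
def conjEnd : Module.End ℂ V →+* Module.End ℂ V where
  toFun α := c.toFun.comp (α.comp c.toFun)
  map_one' := LinearMap.ext c.invol
  map_mul' α β := LinearMap.ext fun v => by simp [c.invol]
  map_zero' := LinearMap.ext fun v => by simp
  map_add' α β := LinearMap.ext fun v => by simp

variable {c}

theorem conjEnd_apply (α : Module.End ℂ V) (v : V) :
    c.conjEnd α v = c.toFun (α (c.toFun v)) :=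
  rfl

theorem conjEnd_smul (a : ℂ) (α : Module.End ℂ V) :
    c.conjEnd (a • α) = (starRingEnd ℂ) a • c.conjEnd α :=
  LinearMap.ext fun v => by simp [conjEnd_apply]

theorem conjEnd_eq_self_iff {α : Module.End ℂ V} :
    c.conjEnd α = α ↔ ∀ v, c.toFun (α v) = α (c.toFun v) := by
  refine ⟨fun h v => ?_, fun h => LinearMap.ext fun v => by rw [conjEnd_apply, h, c.invol]⟩
  nth_rw 1 [← h, conjEnd_apply, c.invol]

theorem conjEnd_expNil [FiniteDimensional ℂ V] (α : Module.End ℂ V) :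
    c.conjEnd (expNil α) = expNil (c.conjEnd α) := by
  simp [expNil, conjEnd_smul]

theorem submap_map (E : Module.End ℂ V) (T : Submodule ℂ V) :
    c.submap (T.map E) = (c.submap T).map (c.conjEnd E) := by
  refine SetLike.coe_injective ?_
  change c.toFun '' (E '' T) = c.conjEnd E '' (c.toFun '' T)
  simp only [Set.image_image, conjEnd_apply, c.invol]

theorem conjEnd_sub_one_mem_lowering {W : ℤ → Submodule ℂ V}
    (hW : ∀ k, ∀ v ∈ W k, c.toFun v ∈ W k) {E : Module.End ℂ V} (hE : E - 1 ∈ lowering W) :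
    c.conjEnd E - 1 ∈ lowering W := by
  rw [← map_one c.conjEnd, ← map_sub, mem_lowering]
  exact fun k v hv => hW _ _ (mem_lowering.1 hE k _ (hW k v hv))

theorem forall_submap_eq_swap_iff {J : ℤ → ℤ → Submodule ℂ V} :
    (∀ p q, c.submap (J p q) = J q p) ↔ ∀ p q, ∀ v ∈ J p q, c.toFun v ∈ J q p := by
  refine ⟨fun h p q v hv => h p q ▸ ⟨v, hv, rfl⟩, fun h p q => le_antisymm ?_ ?_⟩
  · rintro _ ⟨v, hv, rfl⟩
    exact h p q v hv
  · exact fun v hv => ⟨c.toFun v, h q p v hv, c.invol v⟩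

end Conjugation

theorem IsMHS.map_of_sub_one_mem_lowering {V : Type*} [AddCommGroup V] [Module ℂ V]
    [FiniteDimensional ℂ V] {c : Conjugation V} {F W : ℤ → Submodule ℂ V} (h : IsMHS c F W)
    {E : Module.End ℂ V} (hE : E - 1 ∈ lowering W) : IsMHS c (fun p => (F p).map E) W := by
  have hnil := isNilpotent_lowering h.monotone_W h.exists_W_bot h.exists_W_top
  have hEc := Conjugation.conjEnd_sub_one_mem_lowering h.real_W hE
  have hbij := (Module.End.isUnit_iff _).1 (isUnit_of_sub_one_mem hnil hE)
  have hbijc := (Module.End.isUnit_iff _).1 (isUnit_of_sub_one_mem hnil hEc)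
  obtain ⟨a, ha⟩ := h.exists_F_top
  obtain ⟨b, hb⟩ := h.exists_F_bot
  refine
    { antitone_F := fun p q hpq => Submodule.map_mono (h.antitone_F hpq)
      exists_F_top := ⟨a, by simp only [ha, Submodule.map_top, LinearMap.range_eq_top.2 hbij.2]⟩
      exists_F_bot := ⟨b, by simp only [hb, Submodule.map_bot]⟩
      monotone_W := h.monotone_W
      exists_W_bot := h.exists_W_bot
      exists_W_top := h.exists_W_top
      real_W := h.real_W
      graded_sup := fun k p => ?_
      graded_inf := fun k p => ?_ }
  all_goals
    rw [Conjugation.submap_map,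
      map_mkQ_map_inf_of_sub_one_mem_lowering h.monotone_W hE hbij.1,
      map_mkQ_map_inf_of_sub_one_mem_lowering h.monotone_W hEc hbijc.1]
  · exact h.graded_sup k p
  · exact h.graded_inf k p

section Bigrading

variable {V : Type*} [AddCommGroup V] [Module ℂ V] {I : ℤ → ℤ → Submodule ℂ V}
  {α E : Module.End ℂ V} {p q : ℤ} {v : V}

/-- The sum `⨁ I^{r,s}` over `r < p` and `s < q`: the error term in the conjugation symmetry of a
Deligne bigrading, and the target of `I^{p,q}` under `Λ`. -/
def below (I : ℤ → ℤ → Submodule ℂ V) (p q : ℤ) : Submodule ℂ V :=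
  ⨆ x : ℤ × ℤ, ⨆ _ : x.1 < p ∧ x.2 < q, I x.1 x.2

/-- The filtration by total degree, `W_k = ⨁ I^{p,q}` over `p + q ≤ k`. -/
def weightFiltration (I : ℤ → ℤ → Submodule ℂ V) (k : ℤ) : Submodule ℂ V :=
  ⨆ x : ℤ × ℤ, ⨆ _ : x.1 + x.2 ≤ k, I x.1 x.2

theorem le_below {r s : ℤ} (hr : r < p) (hs : s < q) : I r s ≤ below I p q :=
  le_iSup₂_of_le (r, s) ⟨hr, hs⟩ le_rfl

theorem below_mono {p' q' : ℤ} (hp : p ≤ p') (hq : q ≤ q') : below I p q ≤ below I p' q' :=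
  iSup₂_le fun _ hx => le_below (hx.1.trans_le hp) (hx.2.trans_le hq)

theorem map_below (E : Module.End ℂ V) (p q : ℤ) :
    (below I p q).map E = below (fun r s => (I r s).map E) p q := by
  simp only [below, Submodule.map_iSup]

theorem le_weightFiltration (p q : ℤ) : I p q ≤ weightFiltration I (p + q) :=
  le_iSup₂_of_le (p, q) le_rfl le_rfl

theorem monotone_weightFiltration : Monotone (weightFiltration I) := fun _ _ hkl =>
  biSup_mono fun _ hx => le_trans hx hkl

theorem below_le_weightFiltration : below I p q ≤ weightFiltration I (p + q - 1) :=
  iSup₂_le fun x hx => (le_weightFiltration x.1 x.2).trans (monotone_weightFiltration (by omega))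

theorem exists_weightFiltration_eq_bot [FiniteDimensional ℂ V]
    (hI : DirectSum.IsInternal fun x : ℤ × ℤ => I x.1 x.2) : ∃ k, weightFiltration I k = ⊥ := by
  obtain ⟨S, hS⟩ := exists_finset_forall_notMem_eq_bot hI.submodule_iSupIndep
  obtain ⟨a, ha⟩ := (S.image fun x => x.1 + x.2).bddBelow
  refine ⟨a - 1, le_bot_iff.1 (iSup₂_le fun x hx => (hS x fun hxS => ?_).le)⟩
  have hax := ha (Finset.mem_coe.2 (Finset.mem_image_of_mem _ hxS))
  omega

theorem exists_weightFiltration_eq_top [FiniteDimensional ℂ V]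
    (hI : DirectSum.IsInternal fun x : ℤ × ℤ => I x.1 x.2) : ∃ k, weightFiltration I k = ⊤ := by
  obtain ⟨S, hS⟩ := exists_finset_forall_notMem_eq_bot hI.submodule_iSupIndep
  obtain ⟨b, hb⟩ := (S.image fun x => x.1 + x.2).bddAbove
  refine ⟨b, top_le_iff.1 (hI.submodule_iSup_eq_top ▸ iSup_le fun x => ?_)⟩
  by_cases hxS : x ∈ S
  · exact (le_weightFiltration x.1 x.2).trans
      (monotone_weightFiltration (hb (Finset.mem_coe.2 (Finset.mem_image_of_mem _ hxS))))
  · exact (hS x hxS).trans_le bot_le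

theorem disjoint_below (hI : DirectSum.IsInternal fun x : ℤ × ℤ => I x.1 x.2) (p q : ℤ) :
    Disjoint (I p q) (below I p q) :=
  (hI.submodule_iSupIndep (p, q)).mono_right <| biSup_mono fun _ hx hxpq => by simp [hxpq] at hx

theorem gradedProj_of_mem_below (hI : DirectSum.IsInternal fun x : ℤ × ℤ => I x.1 x.2)
    {y : ℤ × ℤ} (hy : ¬(y.1 < p ∧ y.2 < q)) (hv : v ∈ below I p q) : gradedProj hI y v = 0 := by
  have hker : below I p q ≤ LinearMap.ker (gradedProj hI y) :=
    iSup₂_le fun x hx w hw =>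
      gradedProj_of_mem_ne hI (fun hxy : x = y => hy (hxy ▸ hx)) hw
  exact hker hv

theorem gradedProj_sub_mem_below (hI : DirectSum.IsInternal fun x : ℤ × ℤ => I x.1 x.2)
    (hv : v ∈ I p q ⊔ below I p q) : gradedProj hI (p, q) v - v ∈ below I p q := by
  obtain ⟨a, ha, b, hb, rfl⟩ := Submodule.mem_sup.1 hv
  rw [map_add, gradedProj_of_mem (i := (p, q)) hI ha, gradedProj_of_mem_below hI (by simp) hb,
    add_zero, sub_add_cancel_left]
  exact neg_mem hb

theorem apply_mem_below_of_mem_Lambda (hα : α ∈ Lambda I) (hv : v ∈ I p q) :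
    α v ∈ below I p q := by
  have hle : Lambda I ≤ Submodule.compatibleMaps (I p q) (below I p q) :=
    iSup₂_le fun rs hrs β hβ w hw => le_below (by omega) (by omega) (hβ p q w hw)
  exact hle hα hv

theorem gradedProj_mul_mul_gradedProj_mem_Lambda
    (hI : DirectSum.IsInternal fun x : ℤ × ℤ => I x.1 x.2)
    (hα : ∀ p q, ∀ v ∈ I p q, α v ∈ below I p q) (y x : ℤ × ℤ) :
    gradedProj hI y * α * gradedProj hI x ∈ Lambda I := by
  by_cases hyx : y.1 < x.1 ∧ y.2 < x.2
  · refine Submodule.mem_iSup_of_mem (y - x) (Submodule.mem_iSup_of_mem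
      ⟨sub_neg.2 hyx.1, sub_neg.2 hyx.2⟩ fun p q v hv => ?_)
    rcases eq_or_ne (p, q) x with rfl | hne
    · simpa using gradedProj_mem hI y _
    · simp [gradedProj_of_mem_ne hI hne hv]
  · convert zero_mem (Lambda I)
    ext v
    exact gradedProj_of_mem_below hI hyx (hα _ _ _ (gradedProj_mem hI x v))

theorem mem_Lambda_iff [FiniteDimensional ℂ V]
    (hI : DirectSum.IsInternal fun x : ℤ × ℤ => I x.1 x.2) :
    α ∈ Lambda I ↔ ∀ p q, ∀ v ∈ I p q, α v ∈ below I p q := by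
  refine ⟨fun hα p q v => apply_mem_below_of_mem_Lambda hα, fun hα => ?_⟩
  obtain ⟨S, hS⟩ := exists_sum_gradedProj_eq_one hI
  have blocks : α = ∑ x ∈ S, ∑ y ∈ S, gradedProj hI y * α * gradedProj hI x := by
    simp only [← Finset.sum_mul, ← Finset.mul_sum, hS, one_mul, mul_one]
  rw [blocks]
  exact Submodule.sum_mem _ fun x _ => Submodule.sum_mem _ fun y _ =>
    gradedProj_mul_mul_gradedProj_mem_Lambda hI hα y x

theorem apply_mem_below_of_mem_sup_below (hα : α ∈ Lambda I) (hv : v ∈ I p q ⊔ below I p q) :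
    α v ∈ below I p q := by
  have hle : I p q ⊔ below I p q ≤ (below I p q).comap α :=
    sup_le (fun w hw => apply_mem_below_of_mem_Lambda hα hw) <| iSup₂_le fun x hx w hw =>
      below_mono hx.1.le hx.2.le (apply_mem_below_of_mem_Lambda hα hw)
  exact hle hv

theorem Lambda_mul_self_le [FiniteDimensional ℂ V]
    (hI : DirectSum.IsInternal fun x : ℤ × ℤ => I x.1 x.2) :
    Lambda I * Lambda I ≤ Lambda I := by
  refine Submodule.mul_le.2 fun α hα β hβ => (mem_Lambda_iff hI).2 fun p q v hv => ?_
  have hβv := apply_mem_below_of_mem_Lambda hβ hv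
  rw [Module.End.mul_apply]
  exact apply_mem_below_of_mem_sup_below hα (Submodule.mem_sup_right hβv)

theorem Lambda_le_lowering : Lambda I ≤ lowering (weightFiltration I) := by
  refine fun α hα => mem_lowering.2 fun k => ?_
  have hle : weightFiltration I k ≤ (weightFiltration I (k - 1)).comap α :=
    iSup₂_le fun x hx v hv => monotone_weightFiltration (by omega)
      (below_le_weightFiltration (apply_mem_below_of_mem_Lambda hα hv))
  exact hle

theorem isNilpotent_Lambda [FiniteDimensional ℂ V]
    (hI : DirectSum.IsInternal fun x : ℤ × ℤ => I x.1 x.2) : IsNilpotent (Lambda I) :=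
  isNilpotent_of_le (isNilpotent_lowering monotone_weightFiltration
    (exists_weightFiltration_eq_bot hI) (exists_weightFiltration_eq_top hI)) Lambda_le_lowering

theorem eq_one_of_sub_one_mem_Lambda (hI : DirectSum.IsInternal fun x : ℤ × ℤ => I x.1 x.2)
    (hE : E - 1 ∈ Lambda I) (hEI : ∀ p q, ∀ v ∈ I p q, E v ∈ I p q) : E = 1 :=
  linearMap_ext_of_iSup_eq_top hI.submodule_iSup_eq_top fun x v hv => sub_eq_zero.1 <|
    Submodule.disjoint_def.1 (disjoint_below hI x.1 x.2) _ (sub_mem (hEI _ _ v hv) hv)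
      (apply_mem_below_of_mem_Lambda hE hv)

end Bigrading

namespace IsDeligneBigrading

variable {V : Type*} [AddCommGroup V] [Module ℂ V] {c : Conjugation V}
  {F W : ℤ → Submodule ℂ V} {I J : ℤ → ℤ → Submodule ℂ V} {E : Module.End ℂ V} {p q : ℤ} {v : V}

theorem eq_weightFiltration (hI : IsDeligneBigrading c F W I) : W = weightFiltration I :=
  funext hI.hW

theorem conj_mem_sup_below (hI : IsDeligneBigrading c F W I) (hv : v ∈ I p q) :
    c.toFun v ∈ I q p ⊔ below I q p :=
  hI.conj_cond p q v hv

theorem conj_mem_below (hI : IsDeligneBigrading c F W I) (hv : v ∈ below I p q) :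
    c.toFun v ∈ below I q p := by
  have hle : below I p q ≤ (below I q p).comap c.toFun := by
    refine iSup₂_le fun x hx w hw => ?_
    have hsup : I x.2 x.1 ⊔ below I x.2 x.1 ≤ below I q p :=
      sup_le (le_below hx.2 hx.1) (below_mono hx.2.le hx.1.le)
    exact hsup (hI.conj_mem_sup_below hw)
  exact hle hv

theorem map [FiniteDimensional ℂ V] (hI : IsDeligneBigrading c F W I) (hE : E - 1 ∈ Lambda I) :
    IsDeligneBigrading c (fun p => (F p).map E) W (fun p q => (I p q).map E) := by
  have hbij := (Module.End.isUnit_iff _).1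
    (isUnit_of_sub_one_mem (isNilpotent_Lambda hI.internal) hE)
  have hE_apply (v : V) : E v = v + (E - 1) v := by simp
  refine ⟨isInternal_map hbij hI.internal, fun p => ?_, fun k => ?_, fun p q => ?_⟩
  · simp only [hI.hF p, Submodule.map_iSup]
  · simp only [← Submodule.map_iSup]
    rw [hI.eq_weightFiltration]
    exact (map_eq_of_sub_one_mem_lowering monotone_weightFiltration (Lambda_le_lowering hE)
      hbij.1 k).symm
  · have hstable : (I q p ⊔ below I q p).map E = I q p ⊔ below I q p := by
      refine map_eq_self_of_le_comap hbij.1 fun w hw => ?_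
      rw [Submodule.mem_comap, hE_apply]
      exact add_mem hw (Submodule.mem_sup_right (apply_mem_below_of_mem_sup_below hE hw))
    rintro _ ⟨v, hv, rfl⟩
    change _ ∈ (I q p).map E ⊔ below (fun r s => (I r s).map E) q p
    rw [← map_below, ← Submodule.map_sup, hstable, hE_apply, map_add]
    exact add_mem (hI.conj_mem_sup_below hv)
      (Submodule.mem_sup_right (hI.conj_mem_below (apply_mem_below_of_mem_Lambda hE hv)))

theorem conjEnd_mem_Lambda [FiniteDimensional ℂ V] (hI : IsDeligneBigrading c F W I)
    {α : Module.End ℂ V} (hα : α ∈ Lambda I) : c.conjEnd α ∈ Lambda I :=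
  (mem_Lambda_iff hI.internal).2 fun _ _ _ hv => hI.conj_mem_below
    (apply_mem_below_of_mem_sup_below hα (hI.conj_mem_sup_below hv))

theorem le_biSup (hI : IsDeligneBigrading c F W I)
    (hJ : IsDeligneBigrading c F W J) (r s : ℤ) :
    I r s ≤ ⨆ x ∈ {x : ℤ × ℤ | r ≤ x.1} ∩ {x | x.1 + x.2 ≤ r + s}, J x.1 x.2 := by
  rw [← biSup_inf_biSup_of_iSupIndep hJ.internal.submodule_iSupIndep]
  have hF : I r s ≤ F r := hI.hF r ▸ le_iSup₂_of_le (r, s) le_rfl le_rfl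
  have hW : I r s ≤ W (r + s) := hI.eq_weightFiltration ▸ le_weightFiltration r s
  exact le_inf (hF.trans_eq (hJ.hF r)) (hW.trans_eq (hJ.hW (r + s)))

/-- `I^{p,q}` lies in `F^p`, and its conjugate in `F^q ∩ W_{p+q}` up to summands whose second
`J`-degree is less than `p`; conjugating back, only `J^{p,q}` meets both constraints. -/
theorem le_of_split (hI : IsDeligneBigrading c F W I) (hJ : IsDeligneBigrading c F W J)
    (hsplit : ∀ p q, ∀ v ∈ J p q, c.toFun v ∈ J q p) (p q : ℤ) : I p q ≤ J p q := by
  set s : Set (ℤ × ℤ) := {x | p ≤ x.1}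
  set t : Set (ℤ × ℤ) := {x | q ≤ x.2 ∧ x.1 + x.2 ≤ p + q ∨ x.1 < p}
  have hst : s ∩ t ⊆ {(p, q)} := by
    rintro x ⟨hs, ht⟩
    simp only [s, t, Set.mem_ofPred_eq] at hs ht
    ext <;> simp only <;> omega
  have hconj : I q p ⊔ below I q p ≤ (⨆ x ∈ t, J x.1 x.2).comap c.toFun := by
    refine sup_le ((hI.le_biSup hJ q p).trans ?_) <|
      iSup₂_le fun y hy => (hI.le_biSup hJ y.1 y.2).trans ?_
    all_goals
      refine iSup₂_le fun x hx v hv => Submodule.mem_iSup_of_mem x.swap <|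
        Submodule.mem_iSup_of_mem ?_ (hsplit x.1 x.2 v hv)
      simp only [t, Set.mem_inter_iff, Set.mem_ofPred_eq, Prod.fst_swap, Prod.snd_swap] at hx ⊢
      omega
  intro v hv
  have hvs : v ∈ ⨆ x ∈ s, J x.1 x.2 :=
    SetLike.le_def.1 (biSup_mono Set.inter_subset_left)
      (hI.le_biSup hJ p q hv)
  have hvt : v ∈ ⨆ x ∈ t, J x.1 x.2 := c.invol v ▸ hconj (hI.conj_mem_sup_below hv)
  have hvst : v ∈ ⨆ x ∈ s ∩ t, J x.1 x.2 :=
    biSup_inf_biSup_of_iSupIndep hJ.internal.submodule_iSupIndep s t ▸ ⟨hvs, hvt⟩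
  simpa using SetLike.le_def.1 (biSup_mono hst) hvst

theorem eq_of_split (hI : IsDeligneBigrading c F W I) (hJ : IsDeligneBigrading c F W J)
    (hsplit : ∀ p q, ∀ v ∈ J p q, c.toFun v ∈ J q p) : I = J := by
  have huncurried := eq_of_le_of_iSup_eq_top hJ.internal.submodule_iSupIndep
    (fun x => hI.le_of_split hJ hsplit x.1 x.2) hI.internal.submodule_iSup_eq_top
  exact funext₂ fun p q => congrFun huncurried (p, q)

end IsDeligneBigrading

/-- `g ∈ 1 + Λ` is a unipotent correction of conjugation: `conj ∘ g` exchanges `I^{p,q}` and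
`I^{q,p}`, with no error term in lower bidegrees. -/
structure IsConjSplitter {V : Type*} [AddCommGroup V] [Module ℂ V] (c : Conjugation V)
    (I : ℤ → ℤ → Submodule ℂ V) (g : Module.End ℂ V) : Prop where
  sub_one_mem : g - 1 ∈ Lambda I
  conj_mem : ∀ p q, ∀ v ∈ I p q, c.toFun (g v) ∈ I q p

section Splitter

variable {V : Type*} [AddCommGroup V] [Module ℂ V] [FiniteDimensional ℂ V] {c : Conjugation V}
  {F W : ℤ → Submodule ℂ V} {I : ℤ → ℤ → Submodule ℂ V} {g g' E δ X : Module.End ℂ V}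

theorem IsConjSplitter.conjEnd_mul_eq_one (hI : IsDeligneBigrading c F W I)
    (hg : IsConjSplitter c I g) (hg' : IsConjSplitter c I g') : c.conjEnd g * g' = 1 := by
  have hgc : c.conjEnd g - 1 ∈ Lambda I := by
    simpa only [map_sub, map_one] using hI.conjEnd_mem_Lambda hg.sub_one_mem
  have hmul := Lambda_mul_self_le hI.internal
  refine eq_one_of_sub_one_mem_Lambda hI.internal (mul_sub_one_mem hmul hgc hg'.sub_one_mem)
    fun p q v hv => ?_
  rw [Module.End.mul_apply, Conjugation.conjEnd_apply]
  exact hg.conj_mem q p _ (hg'.conj_mem p q v hv)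

theorem IsConjSplitter.unique (hI : IsDeligneBigrading c F W I) (hg : IsConjSplitter c I g)
    (hg' : IsConjSplitter c I g') : g = g' :=
  left_inv_eq_right_inv (mul_eq_one_comm.1 (hg.conjEnd_mul_eq_one hI hg))
    (hg.conjEnd_mul_eq_one hI hg')

theorem IsDeligneBigrading.conjEnd_gradedProj_sub_one_mul_mem_Lambda
    (hI : IsDeligneBigrading c F W I) (x : ℤ × ℤ) :
    (c.conjEnd (gradedProj hI.internal x.swap) - 1) * gradedProj hI.internal x ∈ Lambda I := by
  refine (mem_Lambda_iff hI.internal).2 fun p q v hv => ?_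
  rcases eq_or_ne (p, q) x with rfl | hne
  · rw [Module.End.mul_apply, gradedProj_of_mem hI.internal hv]
    have herr := hI.conj_mem_below
      (gradedProj_sub_mem_below hI.internal (hI.conj_mem_sup_below hv))
    rwa [map_sub, c.invol] at herr
  · rw [Module.End.mul_apply, gradedProj_of_mem_ne hI.internal hne hv, map_zero]
    exact zero_mem _

theorem IsDeligneBigrading.exists_isConjSplitter (hI : IsDeligneBigrading c F W I) :
    ∃ g, IsConjSplitter c I g := by
  set π := gradedProj hI.internal
  obtain ⟨S, hS⟩ := exists_sum_gradedProj_eq_one hI.internal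
  -- With this choice `conj ∘ g` is, on `I^{p,q}`, the leading component `π^{q,p} ∘ conj` of `conj`.
  refine ⟨∑ x ∈ S, c.conjEnd (π x.swap) * π x, ?_, fun p q v hv => ?_⟩
  · rw [← hS, ← Finset.sum_sub_distrib]
    refine Submodule.sum_mem _ fun x _ => ?_
    simpa only [sub_mul, one_mul] using hI.conjEnd_gradedProj_sub_one_mul_mem_Lambda x
  · rw [LinearMap.sum_apply, map_sum]
    refine Submodule.sum_mem _ fun x _ => ?_
    rw [Module.End.mul_apply, Conjugation.conjEnd_apply, c.invol]
    rcases eq_or_ne (p, q) x with rfl | hne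
    · exact gradedProj_mem hI.internal (q, p) _
    · simp only [π, gradedProj_of_mem_ne hI.internal hne hv, map_zero, zero_mem]

theorem IsConjSplitter.conjEnd_log_eq_neg (hI : IsDeligneBigrading c F W I) (hX : X ∈ Lambda I)
    (hg : IsConjSplitter c I (expNil X)) : c.conjEnd X = -X := by
  have hnil := isNilpotent_Lambda hI.internal
  refine injOn_expNil (Lambda_mul_self_le hI.internal) hnil (hI.conjEnd_mem_Lambda hX)
    (neg_mem hX) ?_
  rw [← Conjugation.conjEnd_expNil]
  exact left_inv_eq_right_inv (hg.conjEnd_mul_eq_one hI hg)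
    (expNil_mul_expNil_neg (isNilpotent_of_mem hnil hX))

theorem IsDeligneBigrading.existsUnique_real_isConjSplitter (hI : IsDeligneBigrading c F W I) :
    ∃! δ, δ ∈ Lambda I ∧ c.conjEnd δ = δ ∧
      IsConjSplitter c I (expNil ((-2 * Complex.I) • δ)) := by
  have hbij := bijOn_expNil (Lambda_mul_self_le hI.internal) (isNilpotent_Lambda hI.internal)
  obtain ⟨g, hg⟩ := hI.exists_isConjSplitter
  obtain ⟨X, hX, rfl⟩ := hbij.surjOn hg.sub_one_mem
  have hscale : -2 * Complex.I * (Complex.I / 2) = 1 := by linear_combination -Complex.I_mul_I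
  refine ⟨(Complex.I / 2) • X, ⟨Submodule.smul_mem _ _ hX, ?_, ?_⟩, ?_⟩
  · rw [Conjugation.conjEnd_smul, hg.conjEnd_log_eq_neg hI hX]
    simp [neg_div, Complex.conj_ofNat]
  · rwa [smul_smul, hscale, one_smul]
  · rintro δ ⟨hδ, -, hδg⟩
    have hlog := hbij.injOn (Submodule.smul_mem _ _ hδ) hX (hδg.unique hI hg)
    rw [← hlog, smul_smul, mul_comm, hscale, one_smul]

theorem Conjugation.forall_submap_map_eq_swap_iff (hE : c.conjEnd E * E = 1) :
    (∀ p q, c.submap ((I p q).map E) = (I q p).map E) ↔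
      ∀ p q, ∀ v ∈ I p q, c.toFun ((E * E) v) ∈ I q p := by
  have hcancel (v : V) : c.toFun ((E * E) v) = c.conjEnd E (c.toFun (E v)) := by
    rw [conjEnd_apply, c.invol, Module.End.mul_apply]
  rw [forall_submap_eq_swap_iff (J := fun p q => (I p q).map E)]
  refine forall₂_congr fun p q => ⟨fun h v hv => ?_, ?_⟩
  · obtain ⟨w, hw, hEw⟩ := h (E v) ⟨v, hv, rfl⟩
    rwa [hcancel, ← hEw, ← Module.End.mul_apply, hE]
  · rintro h _ ⟨v, hv, rfl⟩
    refine ⟨_, h v hv, ?_⟩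
    rw [hcancel, ← Module.End.mul_apply, mul_eq_one_comm.1 hE, Module.End.one_apply]

theorem IsDeligneBigrading.exists_split_map_expNil_iff (hI : IsDeligneBigrading c F W I)
    (hδ : δ ∈ Lambda I) (hreal : c.conjEnd δ = δ) :
    (∃ J, IsDeligneBigrading c (fun p => (F p).map (expNil ((-Complex.I) • δ))) W J ∧
      ∀ p q, c.submap (J p q) = J q p) ↔
      IsConjSplitter c I (expNil ((-2 * Complex.I) • δ)) := by
  have hmul := Lambda_mul_self_le hI.internal
  have hmem : (-Complex.I) • δ ∈ Lambda I := Submodule.smul_mem _ _ hδ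
  have hnil := isNilpotent_of_mem (isNilpotent_Lambda hI.internal) hmem
  set E := expNil ((-Complex.I) • δ) with hE
  have hconj : c.conjEnd E * E = 1 := by
    rw [mul_eq_one_comm, hE, Conjugation.conjEnd_expNil, Conjugation.conjEnd_smul, hreal]
    simpa using expNil_mul_expNil_neg hnil
  have hsq : E * E = expNil ((-2 * Complex.I) • δ) := by
    rw [hE, ← expNil_add_of_commute (Commute.refl _) hnil hnil, ← add_smul]
    ring_nf
  have hmap := hI.map (expNil_sub_one_mem hmul hmem)
  rw [← hsq]
  constructor
  · rintro ⟨J, hJ, hsplit⟩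
    obtain rfl := hmap.eq_of_split hJ (Conjugation.forall_submap_eq_swap_iff.1 hsplit)
    exact ⟨hsq ▸ expNil_sub_one_mem hmul (Submodule.smul_mem _ _ hδ),
      (Conjugation.forall_submap_map_eq_swap_iff hconj).1 hsplit⟩
  · exact fun hg => ⟨_, hmap, (Conjugation.forall_submap_map_eq_swap_iff hconj).2 hg.conj_mem⟩

end Splitter

/-- **Deligne splitting.** For every mixed Hodge structure `(F,W)` there is a unique
real element `δ ∈ Λ_{(F,W)}` such that `(exp(-iδ)·F, W)` is a mixed Hodge structure
split over `ℝ`, i.e. whose Deligne bigrading satisfies `conj(J^{p,q}) = J^{q,p}`. -/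
theorem deligne_splitting_existsUnique
    {V : Type*} [AddCommGroup V] [Module ℂ V] [FiniteDimensional ℂ V]
    (c : Conjugation V) (F W : ℤ → Submodule ℂ V) (h : IsMHS c F W)
    (I : ℤ → ℤ → Submodule ℂ V) (hI : IsDeligneBigrading c F W I) :
    ∃! δ : Module.End ℂ V,
      δ ∈ Lambda I ∧ (∀ v, c.toFun (δ v) = δ (c.toFun v)) ∧
      IsMHS c (fun p => (F p).map (expNil ((-Complex.I) • δ))) W ∧
      ∃ J : ℤ → ℤ → Submodule ℂ V,
        IsDeligneBigrading c (fun p => (F p).map (expNil ((-Complex.I) • δ))) W J ∧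
        ∀ p q : ℤ, c.submap (J p q) = J q p := by
  refine (existsUnique_congr fun δ => ?_).mpr hI.existsUnique_real_isConjSplitter
  rw [Conjugation.conjEnd_eq_self_iff]
  refine and_congr_right fun hδ => and_congr_right fun hreal => ?_
  rw [← hI.exists_split_map_expNil_iff hδ (Conjugation.conjEnd_eq_self_iff.2 hreal)]
  refine and_iff_right (h.map_of_sub_one_mem_lowering ?_)
  rw [hI.eq_weightFiltration]
  exact Lambda_le_lowering
    (expNil_sub_one_mem (Lambda_mul_self_le hI.internal) (Submodule.smul_mem _ _ hδ))
end
end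

section
/- Let V be a finite-dimensional complex vector space, a > 0, and (B_m)_{m≥2} a sequence in End(V) such that Σ_{m≥2} B_m y^{−m} converges absolutely for every y > a. Let g : (a,∞) → GL(V) be a C¹ function satisfying g(y)^{−1}·g'(y) = Σ_{m≥2} B_m y^{−m}. Then g(∞) := lim_{y→∞} g(y) exists and is invertible, and there exist g_k, f_k ∈ End(V) (k ≥ 1) such that for all sufficiently large y the convergent expansions g(y) = g(∞)·(1 + Σ_{k≥1} g_k y^{−k}) and g(y)^{−1} = (1 + Σ_{k≥1} f_k y^{−k})·g(∞)^{−1} hold. -/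
noncomputable section

/-!
In the variable `x = 1/y` the equation becomes `h' = -h D`, where `h x = g (1/x)` and
`D x = ∑ x ^ m • B_{m+2}` is analytic at `0`. By the method of majorants the equation
`e' = D e`, `e 0 = 1` has an analytic solution near `0`, and `(h e)' = -h D e + h D e = 0` for small
`x > 0`. So `h e` is a constant `G`, which is invertible because `h` is and `e` is close to `1`.
Thus `h = G e⁻¹` and `h⁻¹ = e G⁻¹`, and expanding the analytic functions `e⁻¹` and `e` at `0` gives
both expansions at once.
-/

open Filter Topology Finset

section PowerSeries

variable {𝕜 E : Type*} [NontriviallyNormedField 𝕜] [NormedAddCommGroup E] [NormedSpace 𝕜 E]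

variable (𝕜) in
/-- The power series `∑ zⁿ • c n` in one variable, as a formal multilinear series: the inverse of
`FormalMultilinearSeries.coeff`. -/
def seriesOfCoeff (c : ℕ → E) : FormalMultilinearSeries 𝕜 𝕜 E :=
  fun n => ContinuousMultilinearMap.mkPiRing 𝕜 (Fin n) (c n)

@[simp]
lemma coeff_seriesOfCoeff (c : ℕ → E) (n : ℕ) : (seriesOfCoeff 𝕜 c).coeff n = c n := by
  simp [seriesOfCoeff, FormalMultilinearSeries.coeff]

lemma hasFPowerSeriesAt_tsum_of_summable [CompleteSpace E] {c : ℕ → E} {r : ℝ} (hr : 0 < r)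
    (hc : Summable fun n => ‖c n‖ * r ^ n) (z₀ : 𝕜) :
    HasFPowerSeriesAt (fun z => ∑' n, (z - z₀) ^ n • c n) (seriesOfCoeff 𝕜 c) z₀ := by
  lift r to NNReal using hr.le
  have radius_pos : 0 < (seriesOfCoeff 𝕜 c).radius := by
    refine lt_of_lt_of_le (by exact_mod_cast hr)
      ((seriesOfCoeff 𝕜 c).le_radius_of_summable_norm (r := r) ?_)
    simpa only [FormalMultilinearSeries.norm_apply_eq_norm_coef, coeff_seriesOfCoeff] using hc
  have translated_sum := ((seriesOfCoeff 𝕜 c).hasFPowerSeriesOnBall radius_pos).comp_sub z₀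
  simpa [FormalMultilinearSeries.sum] using translated_sum.hasFPowerSeriesAt

variable {f : 𝕜 → E} {p : FormalMultilinearSeries 𝕜 𝕜 E} {z₀ : 𝕜}

lemma eventually_summable_norm_pow_smul_coeff (hf : HasFPowerSeriesAt f p z₀) :
    ∀ᶠ z in 𝓝 z₀, Summable fun n => ‖(z - z₀) ^ n • p.coeff n‖ := by
  have sub_tendsto : Tendsto (fun z => z - z₀) (𝓝 z₀) (𝓝 0) := by
    simpa using (continuous_sub_right z₀).tendsto z₀
  filter_upwards [sub_tendsto.eventually (Metric.eball_mem_nhds 0 hf.radius_pos)] with z hz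
  simpa only [FormalMultilinearSeries.apply_eq_pow_smul_coeff] using p.summable_norm_apply hz

lemma eventually_hasDerivAt_tsum_coeff [CompleteSpace E] (hf : HasFPowerSeriesAt f p z₀) :
    ∀ᶠ z in 𝓝 z₀,
      HasDerivAt f (∑' n : ℕ, (z - z₀) ^ n • ((n + 1) • p.coeff (n + 1))) z := by
  obtain ⟨_, hfr⟩ := hf
  filter_upwards [hasFPowerSeriesAt_iff'.1 hfr.fderiv.hasFPowerSeriesAt,
    hfr.analyticAt.eventually_analyticAt] with z hz hfz
  have deriv_hasSum := hz.mapL (ContinuousLinearMap.apply 𝕜 E (1 : 𝕜))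
  simp only [map_smul, ContinuousLinearMap.apply_apply,
    FormalMultilinearSeries.derivSeries_coeff_one] at deriv_hasSum
  rw [deriv_hasSum.tsum_eq]
  exact hfz.differentiableAt.hasDerivAt

lemma exists_norm_coeff_le_mul_pow (hf : HasFPowerSeriesAt f p z₀) :
    ∃ K > 0, ∀ n, ‖p.coeff n‖ ≤ K * K ^ n := by
  obtain ⟨C, r, hC, hr, hp⟩ := p.le_mul_pow_of_radius_pos hf.radius_pos
  refine ⟨max C r, lt_max_of_lt_left hC, fun n => ?_⟩
  calc ‖p.coeff n‖ = ‖p n‖ := FormalMultilinearSeries.norm_apply_eq_norm_coef.symm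
    _ ≤ C * r ^ n := hp n
    _ ≤ max C r * max C r ^ n := by gcongr <;> simp

end PowerSeries

section CauchyProduct

variable {𝕜 A : Type*} [NormedField 𝕜] [NormedRing A] [NormedAlgebra 𝕜 A] [CompleteSpace A]

lemma tsum_pow_smul_mul_tsum_pow_smul {c d : ℕ → A} {z : 𝕜}
    (hc : Summable fun n => ‖z ^ n • c n‖) (hd : Summable fun n => ‖z ^ n • d n‖) :
    (∑' n, z ^ n • c n) * (∑' n, z ^ n • d n) =
      ∑' n, z ^ n • ∑ ij ∈ antidiagonal n, c ij.1 * d ij.2 := by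
  rw [tsum_mul_tsum_eq_tsum_sum_antidiagonal_of_summable_norm hc hd]
  refine tsum_congr fun n => ?_
  rw [smul_sum]
  refine sum_congr rfl fun ij hij => ?_
  rw [← mem_antidiagonal.1 hij, smul_mul_smul_comm, pow_add]

end CauchyProduct

section LinearODE

variable {𝕜 A : Type*} [RCLike 𝕜] [NormedRing A] [NormedAlgebra 𝕜 A]

variable (𝕜) in
/-- The Taylor coefficients of the solution of `e' = D e` with initial value `e₀`, where `d` is the
sequence of Taylor coefficients of `D`; the recursion compares the coefficients of `zⁿ`. The sum
runs over `Fin (n + 1)` so that the recursion is seen to be well founded. -/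
def linearODECoeff (d : ℕ → A) (e₀ : A) : ℕ → A
  | 0 => e₀
  | n + 1 => ((n + 1 : ℕ) : 𝕜)⁻¹ • ∑ j : Fin (n + 1), d (n - j) * linearODECoeff d e₀ j

lemma succ_nsmul_linearODECoeff (d : ℕ → A) (e₀ : A) (n : ℕ) :
    (n + 1) • linearODECoeff 𝕜 d e₀ (n + 1) =
      ∑ ij ∈ antidiagonal n, d ij.1 * linearODECoeff 𝕜 d e₀ ij.2 := by
  rw [linearODECoeff, ← Nat.cast_smul_eq_nsmul 𝕜,
    smul_inv_smul₀ (Nat.cast_ne_zero.2 n.succ_ne_zero), ← Nat.sum_antidiagonal_swap,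
    Nat.sum_antidiagonal_eq_sum_range_succ_mk, sum_range]
  rfl

-- The majorant is `‖e₀‖ / (1 - K z)`, the solution of `E' = K / (1 - K z) * E` with `E 0 = ‖e₀‖`.
lemma norm_linearODECoeff_le {d : ℕ → A} {K : ℝ} (hK : 0 ≤ K) (hd : ∀ n, ‖d n‖ ≤ K * K ^ n)
    (e₀ : A) (n : ℕ) : ‖linearODECoeff 𝕜 d e₀ n‖ ≤ ‖e₀‖ * K ^ n := by
  induction n using Nat.strong_induction_on with
  | _ n ih =>
    cases n with
    | zero => simp [linearODECoeff]
    | succ n =>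
      have term_le : ∀ ij ∈ antidiagonal n,
          ‖d ij.1 * linearODECoeff 𝕜 d e₀ ij.2‖ ≤ ‖e₀‖ * K ^ (n + 1) := by
        intro ij hij
        have hij := mem_antidiagonal.1 hij
        calc ‖d ij.1 * linearODECoeff 𝕜 d e₀ ij.2‖
            ≤ ‖d ij.1‖ * ‖linearODECoeff 𝕜 d e₀ ij.2‖ := norm_mul_le _ _
          _ ≤ (K * K ^ ij.1) * (‖e₀‖ * K ^ ij.2) := by
              gcongr
              exacts [hd _, ih _ (by lia)]
          _ = ‖e₀‖ * K ^ (n + 1) := by rw [← hij]; ring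
      have succ_mul_le :
          ((n + 1 : ℕ) : ℝ) * ‖linearODECoeff 𝕜 d e₀ (n + 1)‖ ≤
            ((n + 1 : ℕ) : ℝ) * (‖e₀‖ * K ^ (n + 1)) := by
        calc ((n + 1 : ℕ) : ℝ) * ‖linearODECoeff 𝕜 d e₀ (n + 1)‖
            = ‖∑ ij ∈ antidiagonal n, d ij.1 * linearODECoeff 𝕜 d e₀ ij.2‖ := by
              rw [← succ_nsmul_linearODECoeff, ← Nat.cast_smul_eq_nsmul 𝕜, norm_smul,
                RCLike.norm_natCast]
          _ ≤ #(antidiagonal n) • (‖e₀‖ * K ^ (n + 1)) :=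
              (norm_sum_le _ _).trans (sum_le_card_nsmul _ _ _ term_le)
          _ = ((n + 1 : ℕ) : ℝ) * (‖e₀‖ * K ^ (n + 1)) := by
              rw [Nat.card_antidiagonal, nsmul_eq_mul]
      exact le_of_mul_le_mul_left succ_mul_le (by positivity)

lemma summable_norm_linearODECoeff {d : ℕ → A} {K : ℝ} (hK : 0 < K)
    (hd : ∀ n, ‖d n‖ ≤ K * K ^ n) (e₀ : A) :
    Summable fun n => ‖linearODECoeff 𝕜 d e₀ n‖ * (2 * K)⁻¹ ^ n := by
  refine .of_nonneg_of_le (fun n => by positivity) (fun n => ?_)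
    (summable_geometric_two.mul_left ‖e₀‖)
  calc ‖linearODECoeff 𝕜 d e₀ n‖ * (2 * K)⁻¹ ^ n
      ≤ ‖e₀‖ * K ^ n * (2 * K)⁻¹ ^ n := by
        gcongr
        exact norm_linearODECoeff_le hK.le hd e₀ n
    _ = ‖e₀‖ * (1 / 2) ^ n := by
        rw [mul_assoc, ← mul_pow]
        congr 2
        field_simp

theorem exists_analyticAt_hasDerivAt_mul [CompleteSpace A] {D : 𝕜 → A} {z₀ : 𝕜}
    (hD : AnalyticAt 𝕜 D z₀) (e₀ : A) :
    ∃ e : 𝕜 → A, AnalyticAt 𝕜 e z₀ ∧ e z₀ = e₀ ∧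
      ∀ᶠ z in 𝓝 z₀, HasDerivAt e (D z * e z) z := by
  obtain ⟨p, hp⟩ := hD
  obtain ⟨K, hK, hpK⟩ := exists_norm_coeff_le_mul_pow hp
  have he := hasFPowerSeriesAt_tsum_of_summable (𝕜 := 𝕜) (by positivity)
    (summable_norm_linearODECoeff (𝕜 := 𝕜) hK hpK e₀) z₀
  refine ⟨_, he.analyticAt, ?_, ?_⟩
  · rw [tsum_eq_single 0 fun n hn => by simp [hn]]
    simp [linearODECoeff]
  · filter_upwards [eventually_hasDerivAt_tsum_coeff he, hasFPowerSeriesAt_iff'.1 hp,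
      eventually_summable_norm_pow_smul_coeff hp, eventually_summable_norm_pow_smul_coeff he]
      with z deriv_e sum_D summable_D summable_e
    simp only [coeff_seriesOfCoeff, succ_nsmul_linearODECoeff] at deriv_e summable_e
    rwa [← sum_D.tsum_eq, tsum_pow_smul_mul_tsum_pow_smul summable_D summable_e]

end LinearODE

section RightNeighborhood

lemma exists_eventually_eq_of_hasDerivAt_zero {E : Type*} [NormedAddCommGroup E] [NormedSpace ℝ E]
    {f : ℝ → E} {x₀ : ℝ} (hf : ∀ᶠ x in 𝓝[>] x₀, HasDerivAt f 0 x) :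
    ∃ C, ∀ᶠ x in 𝓝[>] x₀, f x = C := by
  obtain ⟨x₁, hx₁, hf⟩ := mem_nhdsGT_iff_exists_Ioo_subset.1 hf
  obtain ⟨C, hC⟩ := isOpen_Ioo.exists_is_const_of_deriv_eq_zero isPreconnected_Ioo
    (fun x hx => (hf hx).differentiableAt.differentiableWithinAt) (fun x hx => (hf hx).deriv)
  exact ⟨C, eventually_of_mem (Ioo_mem_nhdsGT hx₁) hC⟩

variable {A : Type*} [NormedRing A] [NormedAlgebra ℝ A] [CompleteSpace A]

theorem exists_unit_mul_analyticAt_of_hasDerivAt_neg_mul {D : ℝ → A} {x₀ : ℝ}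
    (hD : AnalyticAt ℝ D x₀) {h : ℝ → Aˣ}
    (hh : ∀ᶠ x in 𝓝[>] x₀, HasDerivAt (fun t => (h t : A)) (-(h x * D x)) x) :
    ∃ (G : Aˣ) (p q : ℝ → A), AnalyticAt ℝ p x₀ ∧ p x₀ = 1 ∧ AnalyticAt ℝ q x₀ ∧ q x₀ = 1 ∧
      ∀ᶠ x in 𝓝[>] x₀, (h x : A) = G * p x ∧ (↑(h x)⁻¹ : A) = q x * ↑G⁻¹ := by
  obtain ⟨e, he, he₀, deriv_e⟩ := exists_analyticAt_hasDerivAt_mul hD 1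
  have deriv_mul : ∀ᶠ x in 𝓝[>] x₀, HasDerivAt (fun t => h t * e t) 0 x := by
    filter_upwards [hh, deriv_e.filter_mono nhdsWithin_le_nhds] with x deriv_h_x deriv_e_x
    exact (deriv_h_x.mul deriv_e_x).congr_deriv (by noncomm_ring)
  obtain ⟨C, hC⟩ := exists_eventually_eq_of_hasDerivAt_zero deriv_mul
  have isUnit_e : ∀ᶠ x in 𝓝[>] x₀, IsUnit (e x) :=
    (he.continuousAt.eventually (Units.isOpen.mem_nhds (by simp [he₀]))).filter_mono
      nhdsWithin_le_nhds
  obtain ⟨G, rfl⟩ : IsUnit C := by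
    obtain ⟨x, hx, hex⟩ := (hC.and isUnit_e).exists
    exact hx ▸ (h x).isUnit.mul hex
  have inverse_analyticAt : AnalyticAt ℝ (fun x => Ring.inverse (e x)) x₀ :=
    AnalyticAt.fun_comp (by simpa [he₀] using analyticAt_inverse (1 : Aˣ)) he
  refine ⟨G, fun x => Ring.inverse (e x), e, inverse_analyticAt, by simp [he₀], he, he₀, ?_⟩
  filter_upwards [hC, isUnit_e] with x hx ⟨u, hu⟩
  rw [← hu] at hx ⊢
  obtain rfl : h x * u = G := Units.ext hx
  simp

end RightNeighborhood

section ExpansionAtInfinity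

lemma zpow_neg_natCast_sub {α : Type*} [DivisionRing α] (y : α) (m k : ℕ) :
    y ^ (-(m : ℤ) - k) = y⁻¹ ^ (m + k) := by
  rw [inv_pow, ← zpow_natCast, ← zpow_neg]
  congr 1
  push_cast
  ring

variable {E : Type*} [NormedAddCommGroup E] [NormedSpace ℝ E]

lemma analyticAt_tsum_of_summable_zpow [CompleteSpace E] {B : ℕ → E} {y : ℝ} (hy : 0 < y)
    (hB : Summable fun m : ℕ => ‖B m‖ * y ^ (-(m : ℤ) - 2)) :
    AnalyticAt ℝ (fun x : ℝ => ∑' m : ℕ, x ^ m • B m) 0 := by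
  have summable_inv_pow : Summable fun m : ℕ => ‖B m‖ * y⁻¹ ^ m := by
    refine (hB.mul_right (y ^ 2)).congr fun m => ?_
    have zpow_eq : y ^ (-(m : ℤ) - 2) = y⁻¹ ^ (m + 2) := mod_cast zpow_neg_natCast_sub y m 2
    rw [zpow_eq, pow_add, mul_assoc, mul_assoc, ← mul_pow, inv_mul_cancel₀ hy.ne', one_pow,
      mul_one]
  simpa using
    (hasFPowerSeriesAt_tsum_of_summable (inv_pos.2 hy) summable_inv_pow (0 : ℝ)).analyticAt

lemma exists_eventually_expansion_atTop {f : ℝ → E} (hf : AnalyticAt ℝ f 0) :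
    ∃ c : ℕ → E, ∀ᶠ y : ℝ in atTop, (Summable fun k : ℕ => ‖c k‖ * y ^ (-(k : ℤ) - 1)) ∧
      f y⁻¹ = f 0 + ∑' k : ℕ, (y ^ (-(k : ℤ) - 1) : ℝ) • c k := by
  obtain ⟨p, hp⟩ := hf
  have inv_tendsto : Tendsto (fun y : ℝ => y⁻¹) atTop (𝓝 0) := tendsto_inv_atTop_zero
  refine ⟨fun k => p.coeff (k + 1), ?_⟩
  filter_upwards [inv_tendsto.eventually (eventually_summable_norm_pow_smul_coeff hp),
    inv_tendsto.eventually (hasFPowerSeriesAt_iff'.1 hp), eventually_gt_atTop 0]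
    with y summable_norm sum_f y_pos
  have zpow_eq (k : ℕ) : y ^ (-(k : ℤ) - 1) = y⁻¹ ^ (k + 1) :=
    mod_cast zpow_neg_natCast_sub y k 1
  simp only [sub_zero] at summable_norm sum_f
  simp only [zpow_eq]
  constructor
  · refine ((summable_nat_add_iff 1).2 summable_norm).congr fun k => ?_
    rw [norm_smul, norm_pow, Real.norm_of_nonneg (by positivity), mul_comm]
  · have coeff_zero : p.coeff 0 = f 0 := hp.coeff_zero _
    rw [← sum_f.tsum_eq, sum_f.summable.tsum_eq_zero_add, pow_zero, one_smul, coeff_zero]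

lemma hasDerivAt_comp_inv_of_mul_tsum_zpow {A : Type*} [NormedRing A] [NormedAlgebra ℝ A]
    {g : ℝ → A} {B : ℕ → A} {x : ℝ} (hx : x ≠ 0)
    (hg : HasDerivAt g (g x⁻¹ * ∑' m : ℕ, (x⁻¹ ^ (-(m : ℤ) - 2) : ℝ) • B m) x⁻¹) :
    HasDerivAt (fun t => g t⁻¹) (-(g x⁻¹ * ∑' m : ℕ, x ^ m • B m)) x := by
  have sum_eq : ∑' m : ℕ, (x⁻¹ ^ (-(m : ℤ) - 2) : ℝ) • B m = x ^ 2 • ∑' m : ℕ, x ^ m • B m := by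
    rw [← tsum_const_smul'']
    refine tsum_congr fun m => ?_
    have zpow_eq : x⁻¹ ^ (-(m : ℤ) - 2) = x⁻¹⁻¹ ^ (m + 2) := mod_cast zpow_neg_natCast_sub x⁻¹ m 2
    rw [zpow_eq, inv_inv, smul_smul, add_comm, pow_add]
  refine (hg.scomp x (hasDerivAt_inv hx)).congr_deriv ?_
  rw [sum_eq, mul_smul_comm, neg_smul, inv_smul_smul₀ (pow_ne_zero 2 hx)]

end ExpansionAtInfinity

theorem asymptotic_expansion_of_ode_solution_general
    {A : Type*} [NormedRing A] [NormedAlgebra ℝ A] [CompleteSpace A] (a : ℝ) (B : ℕ → A)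
    (hB : ∀ y : ℝ, a < y → Summable fun m : ℕ => ‖B m‖ * y ^ (-(m : ℤ) - 2))
    (g : ℝ → Aˣ)
    (hg : ∀ y : ℝ, a < y → HasDerivAt (fun t => (g t : A))
      (g y * ∑' m : ℕ, (y ^ (-(m : ℤ) - 2) : ℝ) • B m) y) :
    ∃ G : Aˣ, Tendsto (fun y : ℝ => (g y : A)) atTop (𝓝 (G : A)) ∧
      ∃ gs fs : ℕ → A, ∃ b : ℝ, a ≤ b ∧ ∀ y : ℝ, b < y →
        (Summable fun k : ℕ => ‖gs k‖ * y ^ (-(k : ℤ) - 1)) ∧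
        (Summable fun k : ℕ => ‖fs k‖ * y ^ (-(k : ℤ) - 1)) ∧
        (g y : A) = G * (1 + ∑' k : ℕ, (y ^ (-(k : ℤ) - 1) : ℝ) • gs k) ∧
        (↑(g y)⁻¹ : A) = (1 + ∑' k : ℕ, (y ^ (-(k : ℤ) - 1) : ℝ) • fs k) * ↑G⁻¹ := by
  obtain ⟨y₀, hay₀, hy₀⟩ := ((eventually_gt_atTop a).and (eventually_gt_atTop (0 : ℝ))).exists
  have deriv_h : ∀ᶠ x in 𝓝[>] (0 : ℝ), HasDerivAt (fun t => (g t⁻¹ : A))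
      (-(g x⁻¹ * ∑' m : ℕ, x ^ m • B m)) x := by
    filter_upwards [self_mem_nhdsWithin,
      tendsto_inv_nhdsGT_zero.eventually (eventually_gt_atTop a)] with x hx hax
    exact hasDerivAt_comp_inv_of_mul_tsum_zpow (g := fun y => (g y : A)) (ne_of_gt hx) (hg _ hax)
  obtain ⟨G, p, q, hp, hp₀, hq, hq₀, hpq⟩ :=
    exists_unit_mul_analyticAt_of_hasDerivAt_neg_mul (h := fun x => g x⁻¹)
      (analyticAt_tsum_of_summable_zpow hy₀ (hB y₀ hay₀)) deriv_h
  have eventually_eq : ∀ᶠ y in atTop, (g y : A) = G * p y⁻¹ ∧ (↑(g y)⁻¹ : A) = q y⁻¹ * ↑G⁻¹ := by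
    simpa only [inv_inv] using tendsto_inv_atTop_nhdsGT_zero.eventually hpq
  have tendsto_G : Tendsto (fun y : ℝ => G * p y⁻¹) atTop (𝓝 (G : A)) := by
    simpa [hp₀] using (hp.continuousAt.tendsto.comp tendsto_inv_atTop_zero).const_mul (G : A)
  obtain ⟨gs, hgs⟩ := exists_eventually_expansion_atTop hp
  obtain ⟨fs, hfs⟩ := exists_eventually_expansion_atTop hq
  obtain ⟨b, hb⟩ := (((hgs.and hfs).and eventually_eq).and
    (eventually_ge_atTop a)).exists_forall_of_atTop
  refine ⟨G, tendsto_G.congr' (eventually_eq.mono fun y hy => hy.1.symm), gs, fs, b,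
    (hb b le_rfl).2, fun y hy => ?_⟩
  obtain ⟨⟨⟨⟨summable_gs, p_eq⟩, summable_fs, q_eq⟩, g_eq, g_inv_eq⟩, -⟩ := hb y hy.le
  exact ⟨summable_gs, summable_fs, by rw [g_eq, p_eq, hp₀], by rw [g_inv_eq, q_eq, hq₀]⟩

/-- **Existence of asymptotic expansions** (cf. (7.17), Corollary 8.30): a
`GL(V)`-valued solution of `g⁻¹ g' = Σ_{m≥2} B_m y^{-m}` has a limit
`g(∞) = lim_{y→∞} g(y)`, which is invertible, and admits convergent expansions
`g(y) = g(∞)(1 + Σ_{k≥1} g_k y^{-k})` and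
`g(y)⁻¹ = (1 + Σ_{k≥1} f_k y^{-k}) g(∞)⁻¹` for large `y`.
Here `B m`, `gs k`, `fs k` denote `B_{m+2}`, `g_{k+1}`, `f_{k+1}`. -/
theorem asymptotic_expansion_of_ode_solution
    {V : Type*} [NormedAddCommGroup V] [NormedSpace ℂ V] [FiniteDimensional ℂ V]
    (a : ℝ) (ha : 0 < a) (B : ℕ → (V →L[ℂ] V))
    (hB : ∀ y : ℝ, a < y → Summable fun m : ℕ => ‖B m‖ * y ^ (-(m : ℤ) - 2))
    (g : ℝ → (V ≃L[ℂ] V))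
    (hg : ∀ y : ℝ, a < y → HasDerivAt (fun t => (g t : V →L[ℂ] V))
      ((g y : V →L[ℂ] V) * ∑' m : ℕ, (y ^ (-(m : ℤ) - 2) : ℝ) • B m) y) :
    ∃ G : V ≃L[ℂ] V,
      Filter.Tendsto (fun y : ℝ => (g y : V →L[ℂ] V)) Filter.atTop
        (nhds (G : V →L[ℂ] V)) ∧
      ∃ gs fs : ℕ → (V →L[ℂ] V), ∃ b : ℝ, a ≤ b ∧ ∀ y : ℝ, b < y →
        (Summable fun k : ℕ => ‖gs k‖ * y ^ (-(k : ℤ) - 1)) ∧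
        (Summable fun k : ℕ => ‖fs k‖ * y ^ (-(k : ℤ) - 1)) ∧
        (g y : V →L[ℂ] V)
          = (G : V →L[ℂ] V) * (1 + ∑' k : ℕ, (y ^ (-(k : ℤ) - 1) : ℝ) • gs k) ∧
        ((g y).symm : V →L[ℂ] V)
          = (1 + ∑' k : ℕ, (y ^ (-(k : ℤ) - 1) : ℝ) • fs k) * (G.symm : V →L[ℂ] V) := by
  have : CompleteSpace V := FiniteDimensional.complete ℂ V
  obtain ⟨G, expansion⟩ := asymptotic_expansion_of_ode_solution_general a B hB
    (fun y => (ContinuousLinearEquiv.unitsEquiv ℂ V).symm (g y)) hg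
  exact ⟨ContinuousLinearEquiv.unitsEquiv ℂ V G, expansion⟩
end
end
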